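/- For every ε > 0 and every r ∈ (1,2) there are constants C > 0 and C' > 0 such that for every integer y ≥ 1 there is N₀ = N_{r,y} with: for all integers N > N₀, all b with gcd(b,y) = 1, every real Q with 1 ≤ Q < (log N)^{C' r'} (where r' = r/(r−1)), and every finite set F ⊂ [0,N] ∩ ℤ, one has ‖ Lo_{N,y,Q} ∗ 1_F ‖_{ℓ^∞(ℤ)} ≤ C · Q^ε · (y/N)^{1/r} · |F|^{1/r}. -/

import Mathlib

open scoped ENNReal

noncomputable section

/-- `e(t) = e^{2πit}`. -/
def e2pi (t : ℝ) : ℂ := Complex.exp (2 * Real.pi * Complex.I * t)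

/-- For real `x > 0`, `M̂_x(θ) = (1/x) Σ_{0 ≤ n < x} e(-nθ)`. -/
def Mhat (x θ : ℝ) : ℂ :=
  ((1 / x : ℝ) : ℂ) * ∑ n ∈ Finset.range ⌈x⌉₊, e2pi (-(n * θ))

/-- The Gauss-type sum `Υ(a,q)`. -/
def Ups (y : ℕ) (b : ℤ) (a : ℤ) (q : ℕ) : ℂ :=
  ((Nat.totient y : ℂ) / (Nat.totient (Nat.lcm y q) : ℂ)) *
    ∑ r ∈ (Finset.Icc 1 q).filter
        (fun r : ℕ => Nat.gcd r q = 1 ∧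
          (r : ℤ) % (Nat.gcd y q : ℤ) = b % (Nat.gcd y q : ℤ)),
      e2pi (-((((r : ℤ) * a : ℤ) : ℝ) / (q : ℝ)))

/-- The Ramanujan height `h_y(q)` of `q` relative to `y`. -/
def hgt (y q : ℕ) : ℕ :=
  if 1 < Nat.gcd y q ∧ Nat.gcd y q < q ∧ 1 < Nat.gcd (Nat.gcd y q) (q / Nat.gcd y q) then 0
  else Nat.lcm y q / y

/-- The multiplier piece `L̂^{a,q}_{N,y}(ξ) = Υ(a,q) M̂_{N/ℓ}(ℓ(ξ-a/q)) χ(ℓ²(ξ-a/q))`. -/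
def Lhat (χ : ℝ → ℝ) (y : ℕ) (b : ℤ) (N : ℝ) (a q : ℕ) (ξ : ℝ) : ℂ :=
  Ups y b (a : ℤ) q *
    Mhat (N / (Nat.lcm y q : ℝ)) ((Nat.lcm y q : ℝ) * (ξ - (a : ℝ) / (q : ℝ))) *
    ((χ ((Nat.lcm y q : ℝ) ^ 2 * (ξ - (a : ℝ) / (q : ℝ))) : ℝ) : ℂ)

/-- The kernel `L^{a,q}_{N,y}(x) = ∫₀¹ L̂^{a,q}_{N,y}(ξ) e(xξ) dξ`. -/
def Lker (χ : ℝ → ℝ) (y : ℕ) (b : ℤ) (N : ℝ) (a q : ℕ) (x : ℤ) : ℂ :=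
  ∫ ξ in (0:ℝ)..1, Lhat χ y b N a q ξ * e2pi ((x : ℝ) * ξ)


/-- The Low kernel `Lo_{N,y,Q} = Σ_{q : h_y(q) < Q} Σ_{a ∈ A_q} L^{a,q}_{N,y}`
(a finite sum, since `h_y(q) < Q` forces `q ≤ yQ`). -/
def LoK (χ : ℝ → ℝ) (y : ℕ) (b : ℤ) (N : ℕ) (Q : ℝ) (x : ℤ) : ℂ :=
  ∑ q ∈ (Finset.Icc 1 (y * ⌈Q⌉₊)).filter (fun q : ℕ => (hgt y q : ℝ) < Q),
    ∑ a ∈ (Finset.Icc 1 q).filter (fun a : ℕ => Nat.gcd a q = 1),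
      Lker χ y b (N : ℝ) a q x

/-- `(Lo_{N,y,Q} ∗ 1_F)(x)`. -/
def LoConv (χ : ℝ → ℝ) (y : ℕ) (b : ℤ) (N : ℕ) (Q : ℝ) (F : Finset ℤ) (x : ℤ) : ℂ :=
  ∑ z ∈ F, LoK χ y b N Q (x - z)

lemma e2pi_add (s t : ℝ) : e2pi (s + t) = e2pi s * e2pi t := by
  simp only [e2pi, ← Complex.exp_add]
  push_cast
  ring_nf

lemma e2pi_intCast (n : ℤ) : e2pi n = 1 := by
  rw [e2pi, Complex.exp_eq_one_iff]
  exact ⟨n, by push_cast; ring⟩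

@[simp] lemma e2pi_zero : e2pi 0 = 1 := by simp [e2pi]

lemma norm_e2pi (t : ℝ) : ‖e2pi t‖ = 1 := by
  have : (2 * Real.pi * Complex.I * t : ℂ) = ((2 * Real.pi * t : ℝ) : ℂ) * Complex.I := by
    push_cast; ring
  rw [e2pi, this, Complex.norm_exp_ofReal_mul_I]

lemma e2pi_eq_of_sub_eq_intCast {s t : ℝ} (n : ℤ) (h : s - t = n) : e2pi s = e2pi t := by
  rw [show s = t + n by linarith, e2pi_add, e2pi_intCast, mul_one]

lemma e2pi_eq_one_iff (t : ℝ) : e2pi t = 1 ↔ ∃ n : ℤ, t = n := by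
  rw [e2pi, Complex.exp_eq_one_iff]
  refine exists_congr fun n => ?_
  have h : (2 * Real.pi * Complex.I : ℂ) ≠ 0 := Complex.two_pi_I_ne_zero
  rw [mul_comm (n : ℂ), mul_right_inj' h]
  norm_cast

lemma e2pi_nat_mul (n : ℕ) (t : ℝ) : e2pi (n * t) = e2pi t ^ n := by
  rw [e2pi, e2pi, ← Complex.exp_nat_mul]
  push_cast
  ring_nf

lemma sum_Ico_eq_sum_range_of_periodic {M : Type*} [AddCommMonoid M] {F : ℕ → M} {q : ℕ}
    (hF : ∀ n, F (n + q) = F n) (m : ℕ) :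
    ∑ n ∈ Finset.Ico m (m + q), F n = ∑ n ∈ Finset.range q, F n := by
  induction m with
  | zero => simp
  | succ m ih =>
    rw [← ih]
    rcases Nat.eq_zero_or_pos q with rfl | hq
    · simp
    rw [Finset.sum_eq_sum_Ico_succ_bot (show m < m + q by omega),
      show m + 1 + q = m + q + 1 by ring, Finset.sum_Ico_succ_top (by omega), hF, add_comm]

lemma sum_Icc_eq_sum_range_of_periodic {M : Type*} [AddCommMonoid M] {F : ℕ → M} {q : ℕ}
    (hF : ∀ n, F (n + q) = F n) :
    ∑ n ∈ Finset.Icc 1 q, F n = ∑ n ∈ Finset.range q, F n := by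
  rw [← sum_Ico_eq_sum_range_of_periodic hF 1]
  refine Finset.sum_congr ?_ fun _ _ => rfl
  ext n; simp only [Finset.mem_Icc, Finset.mem_Ico]; omega

lemma sum_range_add_of_periodic {M : Type*} [AddCommMonoid M] {F : ℕ → M} {q : ℕ}
    (hF : ∀ n, F (n + q) = F n) (c : ℕ) :
    ∑ n ∈ Finset.range q, F (n + c) = ∑ n ∈ Finset.range q, F n := by
  rw [← sum_Ico_eq_sum_range_of_periodic hF c, Finset.range_eq_Ico,
    Finset.sum_Ico_add' F 0 q c, zero_add, add_comm]

/-- The Ramanujan sum `c_n(x)`. -/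
def ramanujanSum (n : ℕ) (x : ℤ) : ℂ :=
  ∑ a ∈ (Finset.Icc 1 n).filter (fun a : ℕ => Nat.gcd a n = 1), e2pi ((a * x : ℤ) / n)

lemma sum_e2pi_Icc {n : ℕ} (hn : 0 < n) (x : ℤ) :
    ∑ a ∈ Finset.Icc 1 n, e2pi ((a * x : ℤ) / n) = if (n : ℤ) ∣ x then (n : ℂ) else 0 := by
  have hn' : (n : ℝ) ≠ 0 := by positivity
  have hper : ∀ a : ℕ, e2pi (((a + n : ℕ) * x : ℤ) / n) = e2pi ((a * x : ℤ) / n) := fun a =>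
    e2pi_eq_of_sub_eq_intCast x (by push_cast; field_simp; ring)
  rw [sum_Icc_eq_sum_range_of_periodic (F := fun a : ℕ => e2pi ((a * x : ℤ) / n)) hper]
  have hpow : ∀ a : ℕ, e2pi ((a * x : ℤ) / n) = e2pi (x / n) ^ a := fun a => by
    rw [← e2pi_nat_mul]; congr 1; push_cast; ring
  simp only [hpow]
  split_ifs with h
  · obtain ⟨k, rfl⟩ := h
    have : e2pi (((n : ℤ) * k : ℤ) / n) = 1 :=
      (e2pi_eq_one_iff _).2 ⟨k, by push_cast; field_simp⟩
    simp only [this]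
    simp
  · have h1 : e2pi (x / n) ≠ 1 := by
      rw [Ne, e2pi_eq_one_iff]
      rintro ⟨k, hk⟩
      rw [div_eq_iff hn'] at hk
      exact h ⟨k, by rw [mul_comm]; exact_mod_cast hk⟩
    rw [geom_sum_eq h1, ← e2pi_nat_mul, show (n : ℝ) * (x / n) = (x : ℤ) by field_simp,
      e2pi_intCast, sub_self, zero_div]

lemma sum_divisors_ramanujanSum {n : ℕ} (hn : 0 < n) (x : ℤ) :
    ∑ d ∈ n.divisors, ramanujanSum d x = if (n : ℤ) ∣ x then (n : ℂ) else 0 := by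
  rw [← sum_e2pi_Icc hn x, ← Nat.sum_div_divisors n (fun d => ramanujanSum d x)]
  rw [← Finset.sum_fiberwise_of_maps_to (s := Finset.Icc 1 n) (t := n.divisors)
    (g := fun a => Nat.gcd a n) (fun a _ => Nat.mem_divisors.2 ⟨Nat.gcd_dvd_right _ _, hn.ne'⟩)]
  refine Finset.sum_congr rfl fun d hd => ?_
  obtain ⟨m, rfl⟩ := Nat.dvd_of_mem_divisors hd
  have hd0 : 0 < d := Nat.pos_of_mul_pos_right hn
  have hm0 : 0 < m := Nat.pos_of_mul_pos_left hn
  rw [Nat.mul_div_cancel_left m hd0, ramanujanSum]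
  refine Finset.sum_bij (fun a _ => d * a) ?_ ?_ ?_ ?_
  · intro a ha
    simp only [Finset.mem_filter, Finset.mem_Icc] at ha ⊢
    refine ⟨⟨Nat.mul_pos hd0 ha.1.1, Nat.mul_le_mul_left _ ha.1.2⟩, ?_⟩
    rw [Nat.gcd_mul_left, ha.2, mul_one]
  · intro a _ b _ h
    exact Nat.eq_of_mul_eq_mul_left hd0 h
  · intro b hb
    simp only [Finset.mem_filter, Finset.mem_Icc] at hb
    obtain ⟨c, rfl⟩ : d ∣ b := hb.2 ▸ Nat.gcd_dvd_left b (d * m)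
    refine ⟨c, ?_, rfl⟩
    simp only [Finset.mem_filter, Finset.mem_Icc]
    refine ⟨⟨Nat.pos_of_mul_pos_left hb.1.1, Nat.le_of_mul_le_mul_left hb.1.2 hd0⟩, ?_⟩
    have := hb.2
    rw [Nat.gcd_mul_left] at this
    exact Nat.eq_of_mul_eq_mul_left hd0 (by omega)
  · intro a _
    congr 1
    push_cast
    field_simp

open ArithmeticFunction in
lemma ramanujanSum_eq {n : ℕ} (hn : 0 < n) (x : ℤ) :
    ramanujanSum n x = ∑ p ∈ n.divisorsAntidiagonal,
      (moebius p.1 : ℂ) * if (p.2 : ℤ) ∣ x then (p.2 : ℂ) else 0 :=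
  ((sum_eq_iff_sum_mul_moebius_eq (f := fun n => ramanujanSum n x)
    (g := fun n => if (n : ℤ) ∣ x then (n : ℂ) else 0)).1
      (fun _ hm => sum_divisors_ramanujanSum hm x) n hn).symm

lemma norm_ramanujanSum_le {n : ℕ} (hn : 0 < n) (x : ℤ) :
    ‖ramanujanSum n x‖ ≤ ∑ d ∈ n.divisors.filter (fun d : ℕ => (d : ℤ) ∣ x), (d : ℝ) := by
  rw [ramanujanSum_eq hn, Finset.sum_filter,
    ← Nat.sum_divisorsAntidiagonal' (f := fun _ d => if (d : ℤ) ∣ x then (d : ℝ) else 0)]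
  refine (norm_sum_le _ _).trans (Finset.sum_le_sum fun p _ => ?_)
  rw [norm_mul]
  have h1 : ‖(ArithmeticFunction.moebius p.1 : ℂ)‖ ≤ 1 := by
    rw [Complex.norm_intCast]
    exact_mod_cast ArithmeticFunction.abs_moebius_le_one
  split_ifs
  · simpa using mul_le_mul_of_nonneg_right h1 (Nat.cast_nonneg p.2)
  · simp

lemma ramanujanSum_of_isCoprime {n : ℕ} (hn : 0 < n) {x : ℤ} (hx : IsCoprime (n : ℤ) x) :
    ramanujanSum n x = ArithmeticFunction.moebius n := by
  rw [ramanujanSum_eq hn, Finset.sum_eq_single (n, 1)]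
  · simp
  · rintro ⟨i, j⟩ hp hne
    rw [Nat.mem_divisorsAntidiagonal] at hp
    rw [if_neg, mul_zero]
    intro hj
    have h1 : IsUnit (j : ℤ) := hx.isUnit_of_dvd' (Int.natCast_dvd_natCast.2 ⟨i, by rw [← hp.1]; ring⟩) hj
    have h2 : j = 1 := by simpa using Int.ofNat_isUnit.1 h1
    subst h2
    exact hne (by simpa using hp.1)
  · intro h
    exact absurd (Nat.mem_divisorsAntidiagonal.2 ⟨mul_one n, hn.ne'⟩) h

open ArithmeticFunction in
lemma ramanujanSum_mul {m n : ℕ} (hm : 0 < m) (hn : 0 < n) (hmn : m.Coprime n) (x : ℤ) :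
    ramanujanSum (m * n) x = ramanujanSum m x * ramanujanSum n x := by
  let G : ArithmeticFunction ℂ := ⟨fun n => if (n : ℤ) ∣ x then (n : ℂ) else 0, by simp⟩
  have hG : G.IsMultiplicative := by
    refine ⟨by simp [G], fun {a b} hab => ?_⟩
    have h : ((a * b : ℕ) : ℤ) ∣ x ↔ (a : ℤ) ∣ x ∧ (b : ℤ) ∣ x := by
      push_cast
      exact ⟨fun h => ⟨dvd_of_mul_right_dvd h, dvd_of_mul_left_dvd h⟩,
        fun h => (Nat.isCoprime_iff_coprime.2 hab).mul_dvd h.1 h.2⟩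
    simp only [G, coe_mk, h]
    by_cases ha : (a : ℤ) ∣ x <;> by_cases hb : (b : ℤ) ∣ x <;> simp [ha, hb]
  have hμ : (((moebius : ArithmeticFunction ℤ) : ArithmeticFunction ℂ)).IsMultiplicative :=
    isMultiplicative_moebius.intCast
  have key : ∀ k : ℕ, 0 < k → ramanujanSum k x =
      ((moebius : ArithmeticFunction ℤ) * G : ArithmeticFunction ℂ) k := by
    intro k hk
    rw [ramanujanSum_eq hk, ArithmeticFunction.mul_apply]
    rfl
  rw [key _ (Nat.mul_pos hm hn), key _ hm, key _ hn, (hμ.mul hG).map_mul_of_coprime hmn]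

lemma ramanujanSum_congr {n : ℕ} {x x' : ℤ} (h : (n : ℤ) ∣ x - x') :
    ramanujanSum n x = ramanujanSum n x' := by
  obtain ⟨k, hk⟩ := h
  rcases Nat.eq_zero_or_pos n with rfl | hn
  · simp [ramanujanSum]
  refine Finset.sum_congr rfl fun a _ => e2pi_eq_of_sub_eq_intCast (a * k) ?_
  have : (x : ℝ) = x' + n * k := by exact_mod_cast (by linarith : x = x' + n * k)
  push_cast
  rw [this]
  field_simp
  ring

lemma Ups_eq_zero {y q : ℕ} (hq : 0 < q) (b : ℤ)
    (hbad : 1 < Nat.gcd (Nat.gcd y q) (q / Nat.gcd y q)) {a : ℤ} (ha : IsCoprime a q) :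
    Ups y b a q = 0 := by
  set g := Nat.gcd y q with hg
  obtain ⟨p, hp, hpd⟩ := Nat.exists_prime_and_dvd hbad.ne'
  have hpg : p ∣ g := hpd.trans (Nat.gcd_dvd_left _ _)
  obtain ⟨m, hm⟩ : p ∣ q / g := hpd.trans (Nat.gcd_dvd_right _ _)
  have hgq : g ∣ q := Nat.gcd_dvd_right _ _
  have hq' : q = p * (g * m) := by
    rw [← Nat.mul_div_cancel' hgq, hm]; ring
  set c := g * m with hc
  have hpc : p ∣ c := hpg.mul_right m
  have hp0 : (p : ℝ) ≠ 0 := by exact_mod_cast hp.pos.ne'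
  have hc0 : (c : ℝ) ≠ 0 := by
    rintro h
    have : c = 0 := by exact_mod_cast h
    rw [this, mul_zero] at hq'
    omega
  have hqR : (q : ℝ) = p * c := by exact_mod_cast hq'
  let P : ℕ → Prop := fun r => Nat.gcd r q = 1 ∧ (r : ℤ) % (g : ℤ) = b % (g : ℤ)
  let F : ℕ → ℂ := fun r => if P r then e2pi (-((((r : ℤ) * a : ℤ) : ℝ) / (q : ℝ))) else 0
  have hgd : ∀ {k : ℕ}, g ∣ k → ∀ r : ℕ, ((r + k : ℕ) : ℤ) % (g : ℤ) = (r : ℤ) % g := by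
    rintro k ⟨t, rfl⟩ r
    push_cast
    exact Int.add_mul_emod_self_left _ _ _
  have hFper : ∀ r, F (r + q) = F r := by
    intro r
    have h1 : P (r + q) ↔ P r := by
      simp only [P, hgd hgq r, Nat.gcd_add_self_left]
    have h2 : e2pi (-(((((r + q : ℕ) : ℤ) * a : ℤ) : ℝ) / (q : ℝ))) =
        e2pi (-((((r : ℤ) * a : ℤ) : ℝ) / (q : ℝ))) :=
      e2pi_eq_of_sub_eq_intCast (-a) (by push_cast; rw [hqR]; field_simp; ring)
    simp only [F, h1, h2]
  have hcop : ∀ r : ℕ, Nat.gcd (r + c) q = 1 ↔ Nat.gcd r q = 1 := by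
    have key : ∀ r : ℕ, Nat.gcd r q = 1 ↔ Nat.gcd r c = 1 := by
      intro r
      rw [hq']
      change Nat.Coprime _ _ ↔ Nat.Coprime _ _
      rw [Nat.coprime_mul_iff_right]
      exact ⟨fun h => h.2, fun h => ⟨h.coprime_dvd_right hpc, h⟩⟩
    intro r
    rw [key, key, Nat.gcd_add_self_left]
  have hFc : ∀ r, F (r + c) = F r * e2pi (-(a / p)) := by
    intro r
    have h1 : P (r + c) ↔ P r := by
      simp only [P, hgd (Dvd.intro m rfl : g ∣ c) r, hcop]
    have h2 : e2pi (-(((((r + c : ℕ) : ℤ) * a : ℤ) : ℝ) / (q : ℝ))) =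
        e2pi (-((((r : ℤ) * a : ℤ) : ℝ) / (q : ℝ))) * e2pi (-(a / p)) := by
      rw [← e2pi_add]
      congr 1
      push_cast
      rw [hqR]
      field_simp
      ring
    simp only [F, h1, h2]
    split_ifs <;> simp
  have hS := sum_range_add_of_periodic hFper c
  simp only [hFc, ← Finset.sum_mul] at hS
  have hne : e2pi (-(a / p)) ≠ 1 := by
    rw [Ne, e2pi_eq_one_iff]
    rintro ⟨k, hk⟩
    have h1 : (a : ℝ) = -k * p := by
      field_simp at hk
      linarith
    have h2 : (p : ℤ) ∣ a := ⟨-k, by rw [mul_comm]; exact_mod_cast h1⟩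
    have h3 : (p : ℤ) ∣ q := Int.natCast_dvd_natCast.2 ⟨c, hq'⟩
    have := ha.isUnit_of_dvd' h2 h3
    exact hp.one_lt.ne' (by simpa using Int.ofNat_isUnit.1 this)
  have hS0 : ∑ r ∈ Finset.range q, F r = 0 := by
    by_contra h
    exact hne (mul_left_cancel₀ h (by rw [hS, mul_one]))
  rw [Ups, Finset.sum_filter]
  have := sum_Icc_eq_sum_range_of_periodic hFper
  rw [hS0] at this
  simp only [F, P] at this
  rw [this, mul_zero]

lemma exists_mem_Icc_modEq {n : ℕ} (hn : 0 < n) (k : ℤ) :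
    ∃ r ∈ Finset.Icc 1 n, (r : ℤ) ≡ k [ZMOD n] := by
  have hn' : (0 : ℤ) < n := by exact_mod_cast hn
  have h0 := Int.emod_nonneg (k - 1) hn'.ne'
  have h1 := Int.emod_lt_of_pos (k - 1) hn'
  refine ⟨((k - 1) % n + 1).toNat, ?_, ?_⟩
  · rw [Finset.mem_Icc]; omega
  · rw [Int.toNat_of_nonneg (by omega)]
    simpa using (Int.mod_modEq (k - 1) n).add_right 1

lemma eq_of_mem_Icc_of_modEq {n r s : ℕ} (hr : r ∈ Finset.Icc 1 n) (hs : s ∈ Finset.Icc 1 n)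
    (h : (r : ℤ) ≡ s [ZMOD n]) : r = s := by
  rw [Finset.mem_Icc] at hr hs
  have h1 := h.dvd
  have h2 := Int.eq_zero_of_abs_lt_dvd h1 (by rw [abs_lt]; constructor <;> omega)
  omega

lemma sum_coprime_residues_eq {M : Type*} [AddCommMonoid M] {g h : ℕ} (hg : 0 < g) (hh : 0 < h)
    (hgh : g.Coprime h) {b : ℤ} (hb : IsCoprime b g) {f : ℤ → M}
    (hf : ∀ r s : ℤ, r ≡ s [ZMOD h] → f r = f s) :
    ∑ r ∈ (Finset.Icc 1 (g * h)).filter (fun r : ℕ => Nat.gcd r (g * h) = 1 ∧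
      (r : ℤ) % (g : ℤ) = b % (g : ℤ)), f r =
    ∑ s ∈ (Finset.Icc 1 h).filter (fun s : ℕ => Nat.gcd s h = 1), f s := by
  have hghZ : IsCoprime (g : ℤ) h := Nat.isCoprime_iff_coprime.2 hgh
  have hcop : ∀ {r s : ℤ} {n : ℕ}, r ≡ s [ZMOD n] → IsCoprime s n → IsCoprime r n := by
    intro r s n h1 h2
    obtain ⟨k, hk⟩ := h1.dvd
    rw [show r = s + n * (-k) by linarith]
    exact IsCoprime.add_mul_left_left h2 _
  have hiff : ∀ r n : ℕ, Nat.gcd r n = 1 ↔ IsCoprime (r : ℤ) n := fun r n =>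
    Nat.isCoprime_iff_coprime.symm
  choose! φ hφ hφ' using exists_mem_Icc_modEq (n := h) hh
  refine Finset.sum_bij (fun r _ => φ r) ?_ ?_ ?_ ?_
  · intro r hr
    rw [Finset.mem_filter] at hr ⊢
    refine ⟨hφ r, (hiff _ _).2 (hcop (hφ' r) ?_)⟩
    have := (hiff _ _).1 hr.2.1
    push_cast at this
    exact this.of_mul_right_right
  · intro r hr s hs hrs
    rw [Finset.mem_filter] at hr hs
    refine eq_of_mem_Icc_of_modEq hr.1 hs.1 ?_
    have h1 : (r : ℤ) ≡ s [ZMOD h] := by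
      have h2 := hφ' s
      rw [← hrs] at h2
      exact (hφ' r).symm.trans h2
    have h3 : (r : ℤ) ≡ s [ZMOD g] := hr.2.2.trans hs.2.2.symm
    push_cast
    exact Int.modEq_iff_dvd.2 (hghZ.mul_dvd h3.dvd h1.dvd)
  · intro s hs
    rw [Finset.mem_filter] at hs
    obtain ⟨u, v, huv⟩ := hghZ
    obtain ⟨r, hr, hr'⟩ := exists_mem_Icc_modEq (Nat.mul_pos hg hh) (u * g * s + v * h * b)
    have hrg : (r : ℤ) ≡ b [ZMOD g] := by
      refine (hr'.of_dvd (by push_cast; exact dvd_mul_right _ _)).trans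
        (Int.modEq_iff_dvd.2 ⟨u * (b - s), ?_⟩)
      linear_combination (-b) * huv
    have hrh : (r : ℤ) ≡ s [ZMOD h] := by
      refine (hr'.of_dvd (by push_cast; exact dvd_mul_left _ _)).trans
        (Int.modEq_iff_dvd.2 ⟨v * (s - b), ?_⟩)
      linear_combination (-s : ℤ) * huv
    refine ⟨r, ?_, ?_⟩
    · rw [Finset.mem_filter]
      refine ⟨hr, (hiff _ _).2 ?_, hrg⟩
      push_cast
      exact IsCoprime.mul_right (hcop hrg hb) (hcop hrh ((hiff _ _).1 hs.2))
    · exact eq_of_mem_Icc_of_modEq (hφ r) hs.1 ((hφ' r).trans hrh)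
  · intro r _
    exact hf _ _ (hφ' r).symm

lemma sum_ramanujanSum_sub {h : ℕ} (hh : 0 < h) (x : ℤ) :
    ∑ s ∈ (Finset.Icc 1 h).filter (fun s : ℕ => Nat.gcd s h = 1), ramanujanSum h (x - s) =
      ArithmeticFunction.moebius h * ramanujanSum h x := by
  simp only [ramanujanSum]
  rw [Finset.sum_comm, Finset.mul_sum]
  refine Finset.sum_congr rfl fun a ha => ?_
  rw [Finset.mem_filter] at ha
  have hc : IsCoprime (h : ℤ) (-a) := (Nat.isCoprime_iff_coprime.2 ha.2).symm.neg_right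
  rw [← ramanujanSum_of_isCoprime hh hc, ramanujanSum, Finset.sum_mul]
  refine Finset.sum_congr rfl fun s _ => ?_
  rw [← e2pi_add]
  congr 1
  push_cast
  ring

lemma sum_Ups_mul_e2pi {y g h : ℕ} (hy : 0 < y) (hgy : g ∣ y) (hh : 0 < h) (hyh : y.Coprime h)
    {b : ℤ} (hb : IsCoprime b y) (x : ℤ) :
    ∑ a ∈ (Finset.Icc 1 (g * h)).filter (fun a : ℕ => Nat.gcd a (g * h) = 1),
      Ups y b (a : ℤ) (g * h) * e2pi ((x : ℝ) * ((a : ℝ) / ((g * h : ℕ) : ℝ))) =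
    ((Nat.totient h : ℂ))⁻¹ * (ArithmeticFunction.moebius h * ramanujanSum h x) *
      ramanujanSum g (x - b) := by
  have hg : 0 < g := Nat.pos_of_dvd_of_pos hgy hy
  have hgh : g.Coprime h := hyh.coprime_dvd_left hgy
  have hgcd : Nat.gcd y (g * h) = g := by
    rw [Nat.Coprime.gcd_mul_right_cancel_right g hyh.symm, Nat.gcd_eq_right hgy]
  have hlcm : Nat.lcm y (g * h) = y * h := by
    have h1 := Nat.gcd_mul_lcm y (g * h)
    rw [hgcd] at h1
    exact Nat.eq_of_mul_eq_mul_left hg (by rw [h1]; ring)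
  have hbg : IsCoprime b (g : ℤ) :=
    IsCoprime.of_isCoprime_of_dvd_right hb (Int.natCast_dvd_natCast.2 hgy)
  have hφ : (Nat.totient y : ℂ) / (Nat.totient (Nat.lcm y (g * h)) : ℂ) =
      ((Nat.totient h : ℂ))⁻¹ := by
    have : (Nat.totient y : ℂ) ≠ 0 := by
      exact_mod_cast (Nat.totient_pos.2 hy).ne'
    rw [hlcm, Nat.totient_mul hyh]
    push_cast
    field_simp
  simp only [Ups, hgcd, hφ]
  simp only [mul_assoc, Finset.sum_mul, ← Finset.mul_sum]
  congr 1
  rw [Finset.sum_comm]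
  have h1 : ∀ r ∈ (Finset.Icc 1 (g * h)).filter (fun r : ℕ => Nat.gcd r (g * h) = 1 ∧
      (r : ℤ) % (g : ℤ) = b % (g : ℤ)),
      ∑ a ∈ (Finset.Icc 1 (g * h)).filter (fun a : ℕ => Nat.gcd a (g * h) = 1),
        e2pi (-((((r : ℤ) * (a : ℤ) : ℤ) : ℝ) / ((g * h : ℕ) : ℝ))) *
          e2pi ((x : ℝ) * ((a : ℝ) / ((g * h : ℕ) : ℝ))) =
      ramanujanSum h (x - r) * ramanujanSum g (x - b) := by
    intro r hr
    rw [Finset.mem_filter] at hr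
    have h2 : ramanujanSum g (x - b) = ramanujanSum g (x - r) :=
      ramanujanSum_congr (by
        have := Int.ModEq.dvd (show b ≡ r [ZMOD g] from hr.2.2.symm)
        rwa [show x - b - (x - r) = r - b by ring])
    rw [h2, mul_comm (ramanujanSum h _), ← ramanujanSum_mul hg hh hgh, ramanujanSum]
    refine Finset.sum_congr rfl fun a _ => ?_
    rw [← e2pi_add]
    congr 1
    push_cast
    ring
  rw [Finset.sum_congr rfl h1, ← Finset.sum_mul,
    sum_coprime_residues_eq (f := fun r => ramanujanSum h (x - r)) hg hh hgh hbg
      (fun r s hrs => ramanujanSum_congr (by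
        rw [show x - r - (x - s) = s - r by ring]; exact hrs.dvd)),
    sum_ramanujanSum_sub hh, mul_assoc]

lemma sum_low_denominators {y : ℕ} (hy : 0 < y) {b : ℤ} (hb : IsCoprime b y) (Q : ℝ) (x : ℤ)
    (W : ℕ → ℂ) :
    ∑ q ∈ (Finset.Icc 1 (y * ⌈Q⌉₊)).filter (fun q : ℕ => (hgt y q : ℝ) < Q),
      ∑ a ∈ (Finset.Icc 1 q).filter (fun a : ℕ => Nat.gcd a q = 1),
        W (Nat.lcm y q) * (Ups y b (a : ℤ) q * e2pi ((x : ℝ) * ((a : ℝ) / (q : ℝ)))) =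
    ∑ h ∈ (Finset.Icc 1 ⌈Q⌉₊).filter (fun h : ℕ => (h : ℝ) < Q ∧ y.Coprime h),
      W (y * h) * (((Nat.totient h : ℂ))⁻¹ *
        (ArithmeticFunction.moebius h * ramanujanSum h x) *
        if (y : ℤ) ∣ x - b then (y : ℂ) else 0) := by
  simp only [← sum_divisors_ramanujanSum hy, ← Finset.mul_sum]
  set S := (Finset.Icc 1 (y * ⌈Q⌉₊)).filter (fun q : ℕ => (hgt y q : ℝ) < Q) with hS
  have hsub : ∑ q ∈ S, W (Nat.lcm y q) *
        ∑ a ∈ (Finset.Icc 1 q).filter (fun a : ℕ => Nat.gcd a q = 1),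
          (Ups y b (a : ℤ) q * e2pi ((x : ℝ) * ((a : ℝ) / (q : ℝ)))) =
      ∑ q ∈ S.filter (fun q => Nat.gcd (Nat.gcd y q) (q / Nat.gcd y q) = 1), W (Nat.lcm y q) *
        ∑ a ∈ (Finset.Icc 1 q).filter (fun a : ℕ => Nat.gcd a q = 1),
          (Ups y b (a : ℤ) q * e2pi ((x : ℝ) * ((a : ℝ) / (q : ℝ)))) := by
    refine (Finset.sum_filter_of_ne fun q hq hne => ?_).symm
    by_contra hbad
    have hq0 : 0 < q := by
      rw [hS, Finset.mem_filter, Finset.mem_Icc] at hq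
      exact hq.1.1
    have hpos : 0 < Nat.gcd (Nat.gcd y q) (q / Nat.gcd y q) :=
      Nat.gcd_pos_of_pos_left _ (Nat.gcd_pos_of_pos_left _ hy)
    refine hne ?_
    rw [Finset.sum_eq_zero, mul_zero]
    intro a ha
    rw [Finset.mem_filter] at ha
    rw [Ups_eq_zero hq0 b (by omega) (Nat.isCoprime_iff_coprime.2 ha.2), zero_mul]
  simp only [Finset.mul_sum y.divisors]
  rw [hsub, ← Finset.sum_product']
  symm
  have hfacts : ∀ h g : ℕ, g ∣ y → 0 < h → y.Coprime h →
      Nat.gcd y (g * h) = g ∧ Nat.lcm y (g * h) = y * h := by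
    intro h g hgy hh hyh
    have hg : 0 < g := Nat.pos_of_dvd_of_pos hgy hy
    have hgcd : Nat.gcd y (g * h) = g := by
      rw [Nat.Coprime.gcd_mul_right_cancel_right g hyh.symm, Nat.gcd_eq_right hgy]
    refine ⟨hgcd, ?_⟩
    have h1 := Nat.gcd_mul_lcm y (g * h)
    rw [hgcd] at h1
    exact Nat.eq_of_mul_eq_mul_left hg (by rw [h1]; ring)
  refine Finset.sum_bij (fun p _ => p.2 * p.1) ?_ ?_ ?_ ?_
  · rintro ⟨h, g⟩ hp
    simp only [Finset.mem_product, Finset.mem_filter, Finset.mem_Icc, Nat.mem_divisors] at hp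
    obtain ⟨⟨⟨h1, hQ⟩, hlt, hyh⟩, hgy, -⟩ := hp
    have hg : 0 < g := Nat.pos_of_dvd_of_pos hgy hy
    obtain ⟨e1, e2⟩ := hfacts h g hgy h1 hyh
    have hgh : Nat.gcd g h = 1 := hyh.coprime_dvd_left hgy
    simp only [hS, Finset.mem_filter, Finset.mem_Icc, e1]
    refine ⟨⟨⟨Nat.mul_pos hg h1, Nat.mul_le_mul (Nat.le_of_dvd hy hgy) hQ⟩, ?_⟩, ?_⟩
    · have : hgt y (g * h) = h := by
        rw [hgt, e1, e2, Nat.mul_div_cancel_left _ hg, hgh]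
        simp [Nat.mul_div_cancel_left _ hy]
      rwa [this]
    · rw [Nat.mul_div_cancel_left _ hg, hgh]
  · rintro ⟨h, g⟩ hp ⟨h', g'⟩ hp' heq
    simp only [Finset.mem_product, Finset.mem_filter, Finset.mem_Icc, Nat.mem_divisors] at hp hp'
    have e1 := (hfacts h g hp.2.1 hp.1.1.1 hp.1.2.2).1
    have e2 := (hfacts h' g' hp'.2.1 hp'.1.1.1 hp'.1.2.2).1
    dsimp only at heq
    rw [heq, e2] at e1
    subst e1
    have := Nat.eq_of_mul_eq_mul_left (Nat.pos_of_dvd_of_pos hp.2.1 hy) heq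
    rw [this]
  · intro q hq
    simp only [hS, Finset.mem_filter, Finset.mem_Icc] at hq
    obtain ⟨⟨⟨hq1, hq2⟩, hlt⟩, hgood⟩ := hq
    set g := Nat.gcd y q with hg
    have hg0 : 0 < g := Nat.gcd_pos_of_pos_left _ hy
    have hgy : g ∣ y := Nat.gcd_dvd_left _ _
    obtain ⟨h, hh⟩ : g ∣ q := Nat.gcd_dvd_right _ _
    have hdiv : q / g = h := by rw [hh, Nat.mul_div_cancel_left _ hg0]
    have hh0 : 0 < h := Nat.pos_of_ne_zero (by rintro rfl; omega)
    rw [hdiv] at hgood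
    have hyh : y.Coprime h := by
      refine Nat.eq_one_of_dvd_one ?_
      rw [← hgood]
      refine Nat.dvd_gcd ?_ (Nat.gcd_dvd_right _ _)
      rw [hg]
      exact Nat.dvd_gcd (Nat.gcd_dvd_left _ _)
        ((Nat.gcd_dvd_right _ _).trans ⟨g, by rw [hh, mul_comm]⟩)
    have hlcm : Nat.lcm y q = y * h := by
      rw [hh]; exact (hfacts h g hgy hh0 hyh).2
    have hhgt : hgt y q = h := by
      rw [hgt, ← hg, hdiv, hgood, hlcm]
      simp [Nat.mul_div_cancel_left _ hy]
    rw [hhgt] at hlt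
    refine ⟨(h, g), ?_, hh.symm⟩
    simp only [Finset.mem_product, Finset.mem_filter, Finset.mem_Icc, Nat.mem_divisors]
    exact ⟨⟨⟨hh0, by exact_mod_cast hlt.le.trans (Nat.le_ceil Q)⟩, hlt, hyh⟩, hgy, hy.ne'⟩
  · rintro ⟨h, g⟩ hp
    simp only [Finset.mem_product, Finset.mem_filter, Finset.mem_Icc, Nat.mem_divisors] at hp
    obtain ⟨⟨⟨h1, hQ⟩, hlt, hyh⟩, hgy, -⟩ := hp
    rw [sum_Ups_mul_e2pi hy hgy h1 hyh hb, (hfacts h g hgy h1 hyh).2]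

lemma sum_filter_dvd_le (n : ℕ) {d : ℕ} (hd : 0 < d) {f : ℕ → ℝ} (hf : ∀ m, 0 ≤ f m) :
    ∑ m ∈ (Finset.Icc 1 n).filter (fun m => d ∣ m), f m ≤ ∑ e ∈ Finset.Icc 1 n, f (d * e) := by
  rw [← Finset.sum_image (s := Finset.Icc 1 n) (g := fun e => d * e) (f := f)
    (fun a _ b _ h => Nat.eq_of_mul_eq_mul_left hd h)]
  refine Finset.sum_le_sum_of_subset_of_nonneg ?_ fun m _ _ => hf m
  intro m hm
  rw [Finset.mem_filter, Finset.mem_Icc] at hm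
  obtain ⟨⟨h1, h2⟩, e, rfl⟩ := hm
  rw [Finset.mem_image]
  exact ⟨e, Finset.mem_Icc.2 ⟨Nat.pos_of_mul_pos_left h1, (Nat.le_mul_of_pos_left e hd).trans h2⟩,
    rfl⟩

lemma sum_Icc_inv_le (n : ℕ) : ∑ e ∈ Finset.Icc 1 n, (e : ℝ)⁻¹ ≤ 1 + Real.log n := by
  have := harmonic_le_one_add_log n
  rw [harmonic_eq_sum_Icc] at this
  push_cast at this
  exact this

lemma card_divisors_mul_le (m n : ℕ) :
    (m * n).divisors.card ≤ m.divisors.card * n.divisors.card := by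
  rw [Nat.divisors_mul]
  exact Finset.card_mul_le

lemma sum_card_divisors_pow_div_le (k n : ℕ) :
    ∑ m ∈ Finset.Icc 1 n, (m.divisors.card : ℝ) ^ k * (m : ℝ)⁻¹ ≤ (1 + Real.log n) ^ 2 ^ k := by
  induction k with
  | zero => simpa using sum_Icc_inv_le n
  | succ k ih =>
    set f : ℕ → ℝ := fun m => (m.divisors.card : ℝ) ^ k * (m : ℝ)⁻¹ with hf
    have hf0 : ∀ m, 0 ≤ f m := fun m => by positivity
    have hmul : ∀ d e, f (d * e) ≤ f d * f e := by
      intro d e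
      have : ((d * e).divisors.card : ℝ) ≤ d.divisors.card * e.divisors.card := by
        exact_mod_cast card_divisors_mul_le d e
      calc f (d * e) = ((d * e).divisors.card : ℝ) ^ k * ((d : ℝ)⁻¹ * (e : ℝ)⁻¹) := by
            simp only [hf]; push_cast; rw [mul_inv]
        _ ≤ ((d.divisors.card : ℝ) * e.divisors.card) ^ k * ((d : ℝ)⁻¹ * (e : ℝ)⁻¹) := by
            gcongr
        _ = f d * f e := by simp only [hf]; ring
    calc ∑ m ∈ Finset.Icc 1 n, (m.divisors.card : ℝ) ^ (k + 1) * (m : ℝ)⁻¹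
        = ∑ m ∈ Finset.Icc 1 n, ∑ d ∈ Finset.Icc 1 n, if d ∣ m then f m else 0 := by
          refine Finset.sum_congr rfl fun m hm => ?_
          rw [Finset.mem_Icc] at hm
          rw [← Finset.sum_filter, Finset.sum_const, nsmul_eq_mul]
          have : (Finset.Icc 1 n).filter (fun d => d ∣ m) = m.divisors := by
            ext d
            rw [Finset.mem_filter, Finset.mem_Icc, Nat.mem_divisors]
            exact ⟨fun h => ⟨h.2, by omega⟩, fun h => ⟨⟨Nat.pos_of_dvd_of_pos h.1 (by omega),
              (Nat.le_of_dvd (by omega) h.1).trans hm.2⟩, h.1⟩⟩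
          rw [this]
          simp only [hf]
          ring
      _ = ∑ d ∈ Finset.Icc 1 n, ∑ m ∈ (Finset.Icc 1 n).filter (fun m => d ∣ m), f m := by
          rw [Finset.sum_comm]
          simp only [Finset.sum_filter]
      _ ≤ ∑ d ∈ Finset.Icc 1 n, ∑ e ∈ Finset.Icc 1 n, f d * f e := by
          refine Finset.sum_le_sum fun d hd => ?_
          refine (sum_filter_dvd_le n (Finset.mem_Icc.1 hd).1 hf0).trans ?_
          exact Finset.sum_le_sum fun e _ => hmul d e
      _ = (∑ d ∈ Finset.Icc 1 n, f d) * ∑ e ∈ Finset.Icc 1 n, f e := by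
          rw [Finset.sum_mul_sum]
      _ ≤ (1 + Real.log n) ^ 2 ^ k * (1 + Real.log n) ^ 2 ^ k := by
          have h0 : 0 ≤ ∑ d ∈ Finset.Icc 1 n, f d := Finset.sum_nonneg fun d _ => hf0 d
          exact mul_le_mul ih ih h0 (h0.trans ih)
      _ = (1 + Real.log n) ^ 2 ^ (k + 1) := by
          rw [← pow_add, pow_succ, mul_two]

lemma one_add_log_le {δ : ℝ} (hδ : 0 < δ) {x : ℝ} (hx : 1 ≤ x) :
    1 + Real.log x ≤ (1 + 1 / δ) * x ^ δ := by
  have h1 := Real.log_le_rpow_div (by linarith : 0 ≤ x) hδ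
  have h2 : 1 ≤ x ^ δ := Real.one_le_rpow hx hδ.le
  have : (1 + 1 / δ) * x ^ δ = x ^ δ + x ^ δ / δ := by field_simp
  linarith

lemma exists_card_divisors_le {ε : ℝ} (hε : 0 < ε) :
    ∃ C : ℝ, 1 ≤ C ∧ ∀ n : ℕ, 1 ≤ n → (n.divisors.card : ℝ) ≤ C * (n : ℝ) ^ ε := by
  obtain ⟨k, hk⟩ := exists_nat_ge (2 / ε)
  have hk0 : 0 < k := by
    have : (0 : ℝ) < k := lt_of_lt_of_le (by positivity) hk
    exact_mod_cast this
  have hkR : (0 : ℝ) < k := by exact_mod_cast hk0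
  set K : ℝ := (1 + 1 / ((2 : ℝ) ^ k)⁻¹) ^ 2 ^ k with hK
  have hK1 : 1 ≤ K := one_le_pow₀ (by simp)
  refine ⟨K, hK1, fun n hn => ?_⟩
  have hn1 : (1 : ℝ) ≤ n := by exact_mod_cast hn
  have hn0 : (0 : ℝ) ≤ n := by linarith
  have hlog : (1 + Real.log n) ^ 2 ^ k ≤ K * n := by
    have h1 := one_add_log_le (δ := ((2 : ℝ) ^ k)⁻¹) (by positivity) hn1
    have h2 : 0 ≤ 1 + Real.log n := by linarith [Real.log_nonneg hn1]
    refine (pow_le_pow_left₀ h2 h1 (2 ^ k)).trans_eq ?_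
    rw [mul_pow, ← Real.rpow_natCast (_ ^ _) (2 ^ k), ← Real.rpow_mul hn0]
    push_cast
    rw [inv_mul_cancel₀ (by positivity), Real.rpow_one]
  have hpow : (n.divisors.card : ℝ) ^ k ≤ K * n ^ 2 := by
    have h1 : (n.divisors.card : ℝ) ^ k * (n : ℝ)⁻¹ ≤ (1 + Real.log n) ^ 2 ^ k :=
      (Finset.single_le_sum (f := fun m : ℕ => (m.divisors.card : ℝ) ^ k * (m : ℝ)⁻¹)
        (fun m _ => by positivity) (Finset.mem_Icc.2 ⟨hn, le_rfl⟩)).trans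
        (sum_card_divisors_pow_div_le k n)
    rw [← div_eq_mul_inv, div_le_iff₀ (by linarith)] at h1
    nlinarith
  refine le_of_pow_le_pow_left₀ hk0.ne' (by positivity) (hpow.trans ?_)
  rw [mul_pow]
  refine mul_le_mul (le_self_pow₀ hK1 hk0.ne') ?_ (by positivity) (by positivity)
  rw [← Real.rpow_natCast (_ ^ _) k, ← Real.rpow_mul hn0, ← Real.rpow_natCast (n : ℝ) 2]
  refine Real.rpow_le_rpow_of_exponent_le hn1 ?_
  rw [div_le_iff₀ hε] at hk
  push_cast
  linarith

lemma self_le_card_divisors_mul_totient (n : ℕ) : n ≤ n.divisors.card * n.totient := by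
  conv_lhs => rw [← Nat.sum_totient n]
  rw [← smul_eq_mul]
  refine Finset.sum_le_card_nsmul _ _ _ fun d hd => ?_
  rcases Nat.eq_zero_or_pos n with rfl | hn
  · simp at hd
  · exact Nat.le_of_dvd (Nat.totient_pos.2 hn) (Nat.totient_dvd_of_dvd (Nat.dvd_of_mem_divisors hd))

lemma sum_div_dvd_le (n d : ℕ) (hd : 0 < d) :
    ∑ h ∈ (Finset.Icc 1 n).filter (fun h => d ∣ h), (d : ℝ) * (h : ℝ)⁻¹ ≤ 1 + Real.log n := by
  refine (sum_filter_dvd_le n hd fun m => by positivity).trans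
    ((Finset.sum_le_sum fun e _ => le_of_eq ?_).trans (sum_Icc_inv_le n))
  have : (d : ℝ) ≠ 0 := by positivity
  push_cast
  rw [mul_inv, mul_inv_cancel_left₀ this]

lemma sum_inv_lcm_le (n : ℕ) {m : ℕ} (hm : 0 < m) :
    ∑ d ∈ Finset.Icc 1 n, ((Nat.lcm m d : ℕ) : ℝ)⁻¹ ≤
      m.divisors.card * (1 + Real.log n) * (m : ℝ)⁻¹ := by
  have h1 : ∀ d ∈ Finset.Icc 1 n, ((Nat.lcm m d : ℕ) : ℝ)⁻¹ ≤
      ∑ e ∈ m.divisors, if e ∣ d then (m : ℝ)⁻¹ * ((e : ℝ) * (d : ℝ)⁻¹) else 0 := by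
    intro d hd
    have hd0 : 0 < d := (Finset.mem_Icc.1 hd).1
    have h2 := Finset.single_le_sum (s := m.divisors)
      (f := fun e : ℕ => if e ∣ d then (m : ℝ)⁻¹ * ((e : ℝ) * (d : ℝ)⁻¹) else 0)
      (fun e _ => by split_ifs <;> positivity)
      (Nat.mem_divisors.2 ⟨Nat.gcd_dvd_left m d, hm.ne'⟩)
    refine le_trans (le_of_eq ?_) h2
    rw [if_pos (Nat.gcd_dvd_right m d)]
    have h3 : (Nat.gcd m d : ℝ) * (Nat.lcm m d : ℕ) = m * d := by
      exact_mod_cast Nat.gcd_mul_lcm m d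
    have h4 : ((Nat.lcm m d : ℕ) : ℝ) ≠ 0 := by exact_mod_cast (Nat.lcm_pos hm hd0).ne'
    have : (m : ℝ) ≠ 0 := by positivity
    have : (d : ℝ) ≠ 0 := by positivity
    field_simp
    linarith
  refine (Finset.sum_le_sum h1).trans ?_
  rw [Finset.sum_comm]
  simp only [← Finset.sum_filter]
  calc ∑ e ∈ m.divisors, ∑ d ∈ (Finset.Icc 1 n).filter (fun d => e ∣ d),
        (m : ℝ)⁻¹ * ((e : ℝ) * (d : ℝ)⁻¹)
      = ∑ e ∈ m.divisors, ((m : ℝ)⁻¹ * ∑ d ∈ (Finset.Icc 1 n).filter (fun d => e ∣ d),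
        (e : ℝ) * (d : ℝ)⁻¹) := Finset.sum_congr rfl fun e _ => Finset.mul_sum _ _ _ |>.symm
    _ ≤ ∑ e ∈ m.divisors, (m : ℝ)⁻¹ * (1 + Real.log n) := by
        refine Finset.sum_le_sum fun e he => ?_
        gcongr
        exact sum_div_dvd_le n e (Nat.pos_of_mem_divisors he)
    _ = m.divisors.card * (1 + Real.log n) * (m : ℝ)⁻¹ := by
        rw [Finset.sum_const, nsmul_eq_mul]; ring

lemma sum_card_divisors_in_pow_le {ι : Type*} (V : Finset ι) (u : ι → ℤ) {n : ℕ} {D : Finset ℕ}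
    (hD : D ⊆ Finset.Icc 1 n) {P : ℕ → Prop} (hP : ∀ m, P m → ∀ d ∈ D, P (Nat.lcm m d))
    {A B M : ℝ} (hA : 0 ≤ A) (hB : 0 ≤ B)
    (hτ : ∀ m : ℕ, 0 < m → (m : ℝ) ≤ M → m.divisors.card * (1 + Real.log n) ≤ B)
    (hV : ∀ m : ℕ, 0 < m → P m → (m : ℝ) ≤ M →
      ((V.filter (fun i => (m : ℤ) ∣ u i)).card : ℝ) ≤ A * (m : ℝ)⁻¹)
    (k : ℕ) : ∀ m : ℕ, 0 < m → P m → (m : ℝ) * n ^ k ≤ M →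
      ∑ i ∈ V.filter (fun i => (m : ℤ) ∣ u i),
        ((D.filter (fun d : ℕ => (d : ℤ) ∣ u i)).card : ℝ) ^ k ≤ B ^ k * (A * (m : ℝ)⁻¹) := by
  induction k with
  | zero =>
    intro m hm hPm hM
    simpa using hV m hm hPm (by simpa using hM)
  | succ k ih =>
    intro m hm hPm hM
    set t : ι → ℝ := fun i => ((D.filter (fun d : ℕ => (d : ℤ) ∣ u i)).card : ℝ) with ht
    have hsum : ∑ i ∈ V.filter (fun i => (m : ℤ) ∣ u i), t i ^ (k + 1) =
        ∑ d ∈ D, ∑ i ∈ V.filter (fun i => ((Nat.lcm m d : ℕ) : ℤ) ∣ u i), t i ^ k := by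
      have h1 : ∀ i, t i ^ (k + 1) = ∑ d ∈ D, if (d : ℤ) ∣ u i then t i ^ k else 0 := by
        intro i
        rw [← Finset.sum_filter, Finset.sum_const, nsmul_eq_mul, pow_succ']
      simp only [h1]
      rw [Finset.sum_comm]
      refine Finset.sum_congr rfl fun d _ => ?_
      rw [← Finset.sum_filter, Finset.filter_filter]
      refine Finset.sum_congr (Finset.filter_congr fun i _ => ?_) fun _ _ => rfl
      simp only [Int.natCast_dvd, Nat.lcm_dvd_iff]
    rw [hsum]
    have hn1 : ∀ d ∈ D, 1 ≤ d ∧ d ≤ n := fun d hd => Finset.mem_Icc.1 (hD hd)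
    rcases D.eq_empty_or_nonempty with hDe | ⟨d0, hd0⟩
    · rw [hDe, Finset.sum_empty]
      positivity
    have hn : (1 : ℝ) ≤ n := by exact_mod_cast (hn1 d0 hd0).1.trans (hn1 d0 hd0).2
    have hmM : (m : ℝ) ≤ M :=
      le_trans (le_mul_of_one_le_right (by positivity) (one_le_pow₀ hn)) hM
    calc ∑ d ∈ D, ∑ i ∈ V.filter (fun i => ((Nat.lcm m d : ℕ) : ℤ) ∣ u i), t i ^ k
        ≤ ∑ d ∈ D, B ^ k * (A * ((Nat.lcm m d : ℕ) : ℝ)⁻¹) := by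
          refine Finset.sum_le_sum fun d hd => ?_
          obtain ⟨hd1, hd2⟩ := hn1 d hd
          refine ih _ (Nat.lcm_pos hm hd1) (hP m hPm d hd) (le_trans ?_ hM)
          have h2 : ((Nat.lcm m d : ℕ) : ℝ) ≤ m * n := by
            exact_mod_cast (Nat.le_of_dvd (Nat.mul_pos hm hd1) (Nat.lcm_dvd_mul m d)).trans
              (Nat.mul_le_mul_left m hd2)
          rw [pow_succ', ← mul_assoc]
          gcongr
      _ ≤ ∑ d ∈ Finset.Icc 1 n, B ^ k * (A * ((Nat.lcm m d : ℕ) : ℝ)⁻¹) :=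
          Finset.sum_le_sum_of_subset_of_nonneg hD fun d _ _ => by positivity
      _ = B ^ k * (A * ∑ d ∈ Finset.Icc 1 n, ((Nat.lcm m d : ℕ) : ℝ)⁻¹) := by
          simp only [Finset.mul_sum]
      _ ≤ B ^ k * (A * (B * (m : ℝ)⁻¹)) := by
          gcongr
          refine (sum_inv_lcm_le n hm).trans ?_
          gcongr
          exact hτ m hm hmM
      _ = B ^ (k + 1) * (A * (m : ℝ)⁻¹) := by ring

lemma sum_inv_totient_mul_norm_ramanujanSum_le {n : ℕ} {D : Finset ℕ}
    (hD : D ⊆ Finset.Icc 1 n) (hDd : ∀ h ∈ D, ∀ d, d ∣ h → d ∈ D) {B : ℝ}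
    (hτ : ∀ m ∈ Finset.Icc 1 n, (m.divisors.card : ℝ) ≤ B) (x : ℤ) :
    ∑ h ∈ D, (Nat.totient h : ℝ)⁻¹ * ‖ramanujanSum h x‖ ≤
      B * (1 + Real.log n) * (D.filter (fun d : ℕ => (d : ℤ) ∣ x)).card := by
  have hpt : ∀ h ∈ D, (Nat.totient h : ℝ)⁻¹ * ‖ramanujanSum h x‖ ≤
      B * ∑ d ∈ D.filter (fun d : ℕ => (d : ℤ) ∣ x),
        if d ∣ h then (d : ℝ) * (h : ℝ)⁻¹ else 0 := by
    intro h hh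
    have hh1 : 0 < h := (Finset.mem_Icc.1 (hD hh)).1
    have hB := hτ h (hD hh)
    have h1 : (Nat.totient h : ℝ)⁻¹ ≤ B * (h : ℝ)⁻¹ := by
      have h2 : (h : ℝ) ≤ h.divisors.card * h.totient := by
        exact_mod_cast self_le_card_divisors_mul_totient h
      have h3 : (0 : ℝ) < h.totient := by exact_mod_cast Nat.totient_pos.2 hh1
      rw [← div_eq_mul_inv, inv_le_iff_one_le_mul₀ h3, div_mul_eq_mul_div,
        one_le_div (by positivity)]
      exact h2.trans (mul_le_mul_of_nonneg_right hB h3.le)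
    have h4 : ∑ d ∈ h.divisors.filter (fun d : ℕ => (d : ℤ) ∣ x), (d : ℝ) =
        ∑ d ∈ D.filter (fun d : ℕ => (d : ℤ) ∣ x), if d ∣ h then (d : ℝ) else 0 := by
      rw [← Finset.sum_filter, Finset.filter_filter]
      refine Finset.sum_congr ?_ fun _ _ => rfl
      ext d
      simp only [Finset.mem_filter, Nat.mem_divisors]
      exact ⟨fun hd => ⟨hDd h hh d hd.1.1, hd.2, hd.1.1⟩, fun hd => ⟨⟨hd.2.2, hh1.ne'⟩, hd.2.1⟩⟩
    calc (Nat.totient h : ℝ)⁻¹ * ‖ramanujanSum h x‖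
        ≤ (B * (h : ℝ)⁻¹) * ∑ d ∈ D.filter (fun d : ℕ => (d : ℤ) ∣ x),
            if d ∣ h then (d : ℝ) else 0 := by
          rw [← h4]
          refine mul_le_mul h1 (norm_ramanujanSum_le hh1 x) (norm_nonneg _) ?_
          exact le_trans (by positivity) h1
      _ = _ := by
          rw [mul_assoc, Finset.mul_sum]
          congr 1
          refine Finset.sum_congr rfl fun d _ => ?_
          split_ifs <;> ring
  rcases D.eq_empty_or_nonempty with hDe | ⟨d0, hd0⟩
  · simp [hDe]
  have hB0 : 0 ≤ B := le_trans (by positivity) (hτ d0 (hD hd0))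
  refine (Finset.sum_le_sum hpt).trans ?_
  rw [← Finset.mul_sum, Finset.sum_comm, mul_assoc]
  refine mul_le_mul_of_nonneg_left ?_ hB0
  rw [mul_comm, ← nsmul_eq_mul]
  refine Finset.sum_le_card_nsmul _ _ _ fun d hd => ?_
  have hd1 := (Finset.mem_Icc.1 (hD (Finset.mem_filter.1 hd).1)).1
  refine le_trans ?_ (sum_div_dvd_le n d hd1)
  rw [← Finset.sum_filter]
  exact Finset.sum_le_sum_of_subset_of_nonneg (Finset.filter_subset_filter _ hD)
    fun h _ _ => by positivity

lemma card_filter_modEq_le {w N k : ℤ} (hk : 0 < k) (hkN : k ≤ N) (v : ℤ) :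
    (((Finset.Ioc (w - N - 1) w).filter (fun u => u ≡ v [ZMOD k])).card : ℝ) ≤
      3 * N * (k : ℝ)⁻¹ := by
  have h := Int.Ioc_filter_modEq_card (w - N - 1) w hk v
  have hkR : (0 : ℝ) < k := by exact_mod_cast hk
  have hkNR : (k : ℝ) ≤ N := by exact_mod_cast hkN
  have hk1 : (1 : ℝ) ≤ k := by exact_mod_cast hk
  have h1 := Int.floor_le (((w : ℚ) - v) / (k : ℚ))
  have h2 := Int.lt_floor_add_one ((((w - N - 1 : ℤ) : ℚ) - v) / (k : ℚ))
  rw [← div_eq_mul_inv, le_div_iff₀ hkR]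
  have h3 : (((Finset.Ioc (w - N - 1) w).filter (fun u => u ≡ v [ZMOD k])).card : ℤ) * k ≤
      3 * N := by
    rw [h]
    rcases le_total (⌊((w : ℚ) - v) / (k : ℚ)⌋ - ⌊(((w - N - 1 : ℤ) : ℚ) - v) / (k : ℚ)⌋) 0
      with h0 | h0
    · rw [max_eq_right h0]; omega
    · rw [max_eq_left h0]
      have hkQ : (0 : ℚ) < k := by exact_mod_cast hk
      rw [le_div_iff₀ hkQ] at h1
      rw [div_lt_iff₀ hkQ] at h2
      have h4 : (⌊((w : ℚ) - v) / (k : ℚ)⌋) * k ≤ w - v := by exact_mod_cast h1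
      have h5 : w - N - 1 - v < (⌊(((w - N - 1 : ℤ) : ℚ) - v) / (k : ℚ)⌋ + 1) * k := by
        exact_mod_cast h2
      nlinarith
  exact_mod_cast h3

lemma continuous_e2pi : Continuous e2pi := by
  unfold e2pi
  fun_prop

lemma continuous_Mhat (x : ℝ) : Continuous (Mhat x) := by
  unfold Mhat
  exact continuous_const.mul (continuous_finsetSum _ fun n _ =>
    continuous_e2pi.comp (by fun_prop))

open SchwartzMap FourierTransform in
lemma exists_decay_integral_mul_e2pi {χ : ℝ → ℝ} (hχs : ContDiff ℝ (⊤ : ℕ∞) χ)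
    (hχc : HasCompactSupport χ) :
    ∃ A : ℝ, 0 < A ∧ ∀ t : ℝ, ‖∫ θ : ℝ, (χ θ : ℂ) * e2pi (t * θ)‖ ≤ A * (1 + t ^ 2)⁻¹ := by
  have h1 : HasCompactSupport (fun θ : ℝ => (χ θ : ℂ)) :=
    hχc.comp_left (g := fun r : ℝ => (r : ℂ)) (by simp)
  have h2 : ContDiff ℝ (⊤ : ℕ∞) (fun θ : ℝ => (χ θ : ℂ)) := Complex.ofRealCLM.contDiff.comp hχs
  let f : 𝓢(ℝ, ℂ) := h1.toSchwartzMap h2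
  have hf : ∀ t, (𝓕⁻ f) t = ∫ θ : ℝ, (χ θ : ℂ) * e2pi (t * θ) := by
    intro t
    rw [fourierInv_coe, Real.fourierInv_eq']
    refine MeasureTheory.integral_congr_ae (Filter.Eventually.of_forall fun θ => ?_)
    have : f θ = (χ θ : ℂ) := rfl
    simp only [this, smul_eq_mul, e2pi]
    rw [mul_comm]
    congr 2
    simp only [RCLike.inner_apply, conj_trivial]
    push_cast
    ring
  obtain ⟨C0, hC0, h0⟩ := (𝓕⁻ f).decay 0 0
  obtain ⟨C2, hC2, h2'⟩ := (𝓕⁻ f).decay 2 0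
  refine ⟨C0 + C2, by positivity, fun t => ?_⟩
  have e0 := h0 t
  have e2 := h2' t
  simp only [norm_iteratedFDeriv_zero, pow_zero, one_mul, Real.norm_eq_abs, sq_abs] at e0 e2
  rw [← hf, ← div_eq_mul_inv, le_div_iff₀ (by positivity)]
  linarith

lemma inv_one_add_sq_le_arctan {δ : ℝ} (hδ : 0 < δ) (hδ1 : δ ≤ 1) (t : ℝ) :
    (1 + t ^ 2)⁻¹ ≤ 3 * δ⁻¹ * (Real.arctan (t + δ) - Real.arctan t) := by
  obtain ⟨c, hc, hc'⟩ := exists_deriv_eq_slope Real.arctan (show t < t + δ by linarith)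
    Real.continuous_arctan.continuousOn Real.differentiable_arctan.differentiableOn
  rw [Real.deriv_arctan, add_sub_cancel_left, eq_div_iff hδ.ne'] at hc'
  rw [← hc', mul_assoc, mul_comm (1 / (1 + c ^ 2)), inv_mul_cancel_left₀ hδ.ne', mul_one_div,
    inv_eq_one_div, div_le_div_iff₀ (by positivity) (by positivity)]
  obtain ⟨h1, h2⟩ := hc
  have h3 : (c - t) ^ 2 ≤ 1 := by
    rw [sq_le_one_iff_abs_le_one, abs_le]
    constructor <;> linarith
  nlinarith [sq_nonneg (c - 2 * t)]

lemma sum_inv_one_add_sq_le {l : ℕ} (hl : 0 < l) (s : ℝ) (m : ℕ) :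
    ∑ n ∈ Finset.range m, (1 + ((s - n) / l) ^ 2)⁻¹ ≤ 3 * Real.pi * l := by
  have hl0 : (0 : ℝ) < l := by exact_mod_cast hl
  have hl1 : (l : ℝ)⁻¹ ≤ 1 := inv_le_one_of_one_le₀ (by exact_mod_cast hl)
  have h1 : ∀ n ∈ Finset.range m, (1 + ((s - n) / l) ^ 2)⁻¹ ≤
      3 * l * (Real.arctan ((s - n + 1) / l) - Real.arctan ((s - (n + 1 : ℕ) + 1) / l)) := by
    intro n _
    have := inv_one_add_sq_le_arctan (inv_pos.2 hl0) hl1 ((s - n) / l)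
    rw [inv_inv] at this
    convert this using 5
    · field_simp
    · push_cast; ring
  refine (Finset.sum_le_sum h1).trans ?_
  rw [← Finset.mul_sum, Finset.sum_range_sub' (fun n : ℕ => Real.arctan ((s - n + 1) / l))]
  have h2 := Real.arctan_lt_pi_div_two ((s - (0 : ℕ) + 1) / l)
  have h3 := Real.neg_pi_div_two_lt_arctan ((s - m + 1) / l)
  nlinarith

/-- The kernel `∫ M̂_{N/l}(lθ) χ(l²θ) e(xθ) dθ` on the line, before modulation. -/
def lineKernel (χ : ℝ → ℝ) (N : ℝ) (l : ℕ) (x : ℝ) : ℂ :=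
  ∫ θ : ℝ, Mhat (N / l) (l * θ) * ((χ ((l : ℝ) ^ 2 * θ) : ℝ) : ℂ) * e2pi (x * θ)

lemma norm_lineKernel_le {χ : ℝ → ℝ} (hχs : ContDiff ℝ (⊤ : ℕ∞) χ)
    (hχc : HasCompactSupport χ) :
    ∃ C : ℝ, 0 < C ∧ ∀ N : ℝ, 0 < N → ∀ l : ℕ, 0 < l → ∀ x : ℝ,
      ‖lineKernel χ N l x‖ ≤ C * N⁻¹ := by
  obtain ⟨A, hA, hdec⟩ := exists_decay_integral_mul_e2pi hχs hχc
  refine ⟨A * (3 * Real.pi), by positivity, fun N hN l hl x => ?_⟩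
  have hl0 : (0 : ℝ) < l := by exact_mod_cast hl
  have hl2 : (l : ℝ) ^ 2 ≠ 0 := by positivity
  have hint : ∀ s : ℝ, MeasureTheory.Integrable
      (fun θ : ℝ => ((χ ((l : ℝ) ^ 2 * θ) : ℝ) : ℂ) * e2pi (s * θ)) := by
    intro s
    have hc : Continuous fun θ : ℝ => ((χ ((l : ℝ) ^ 2 * θ) : ℝ) : ℂ) * e2pi (s * θ) :=
      (Complex.continuous_ofReal.comp (hχs.continuous.comp (by fun_prop))).mul
        (continuous_e2pi.comp (by fun_prop))
    refine hc.integrable_of_hasCompactSupport (HasCompactSupport.mul_right ?_)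
    exact (hχc.comp_homeomorph (Homeomorph.mulLeft₀ _ hl2)).comp_left
      (g := fun r : ℝ => (r : ℂ)) (by simp)
  have hscale : ∀ s : ℝ, ‖∫ θ : ℝ, ((χ ((l : ℝ) ^ 2 * θ) : ℝ) : ℂ) * e2pi (s * θ)‖ ≤
      ((l : ℝ) ^ 2)⁻¹ * (A * (1 + (s / (l : ℝ) ^ 2) ^ 2)⁻¹) := by
    intro s
    have h1 := MeasureTheory.Measure.integral_comp_mul_left
      (fun u : ℝ => (χ u : ℂ) * e2pi (s / (l : ℝ) ^ 2 * u)) ((l : ℝ) ^ 2)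
    have h2 : ∀ θ : ℝ, s / (l : ℝ) ^ 2 * ((l : ℝ) ^ 2 * θ) = s * θ := fun θ => by field_simp
    simp only [h2] at h1
    rw [h1, norm_smul, Real.norm_eq_abs, abs_abs, abs_of_pos (by positivity)]
    exact mul_le_mul_of_nonneg_left (hdec _) (by positivity)
  have hexp : lineKernel χ N l x = ((1 / (N / l) : ℝ) : ℂ) *
      ∑ n ∈ Finset.range ⌈N / l⌉₊,
        ∫ θ : ℝ, ((χ ((l : ℝ) ^ 2 * θ) : ℝ) : ℂ) * e2pi ((x - n * l) * θ) := by
    rw [← MeasureTheory.integral_finsetSum _ fun n _ => hint _,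
      ← MeasureTheory.integral_const_mul, lineKernel]
    refine MeasureTheory.integral_congr_ae (Filter.Eventually.of_forall fun θ => ?_)
    simp only [Mhat]
    rw [mul_assoc, mul_assoc, Finset.sum_mul]
    congr 1
    refine Finset.sum_congr rfl fun n _ => ?_
    rw [show (x - n * l) * θ = -(n * (l * θ)) + x * θ by ring, e2pi_add]
    ring
  rw [hexp, norm_mul, Complex.norm_real, Real.norm_eq_abs, abs_of_pos (by positivity)]
  calc 1 / (N / l) * ‖∑ n ∈ Finset.range ⌈N / l⌉₊,
        ∫ θ : ℝ, ((χ ((l : ℝ) ^ 2 * θ) : ℝ) : ℂ) * e2pi ((x - n * l) * θ)‖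
      ≤ 1 / (N / l) * ∑ n ∈ Finset.range ⌈N / l⌉₊,
          ((l : ℝ) ^ 2)⁻¹ * (A * (1 + ((x / l - n) / l) ^ 2)⁻¹) := by
        gcongr
        refine norm_sum_le_of_le _ fun n _ => ?_
        convert hscale (x - n * l) using 6
        field_simp
    _ = 1 / (N / l) * (((l : ℝ) ^ 2)⁻¹ * (A * ∑ n ∈ Finset.range ⌈N / l⌉₊,
          (1 + ((x / l - n) / l) ^ 2)⁻¹)) := by
        simp only [Finset.mul_sum]
    _ ≤ 1 / (N / l) * (((l : ℝ) ^ 2)⁻¹ * (A * (3 * Real.pi * l))) := by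
        gcongr
        exact sum_inv_one_add_sq_le hl _ _
    _ = A * (3 * Real.pi) * N⁻¹ := by field_simp

/-- The part of `lineKernel` carried by positive frequencies. -/
def halfLineKernel (χ : ℝ → ℝ) (N : ℝ) (l : ℕ) (x : ℝ) : ℂ :=
  ∫ θ in Set.Ioi (0 : ℝ), Mhat (N / l) (l * θ) * ((χ ((l : ℝ) ^ 2 * θ) : ℝ) : ℂ) * e2pi (x * θ)

lemma Lker_eq {χ : ℝ → ℝ} (hχs : ContDiff ℝ (⊤ : ℕ∞) χ)
    (hχ0 : ∀ x : ℝ, x ∉ Set.Icc (-(1/4) : ℝ) (1/4) → χ x = 0) {y a q : ℕ} (hy : 0 < y) (b : ℤ)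
    (N : ℝ) (ha : 1 ≤ a) (haq : a ≤ q) (hcop : Nat.gcd a q = 1) (x : ℤ) :
    Lker χ y b N a q x =
      lineKernel χ N (Nat.lcm y q) x * (Ups y b (a : ℤ) q * e2pi ((x : ℝ) * ((a : ℝ) / (q : ℝ)))) -
        if q = 1 then Ups y b 1 1 * halfLineKernel χ N y x else 0 := by
  set l := Nat.lcm y q with hl
  have hq : 0 < q := by omega
  have hql : q ≤ l := Nat.le_of_dvd (Nat.lcm_pos hy hq) (Nat.dvd_lcm_right y q)
  have hq0 : (0 : ℝ) < q := by exact_mod_cast hq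
  have hl0 : (0 : ℝ) < l := by exact_mod_cast hq.trans_le hql
  set k : ℝ → ℂ := fun θ =>
    Mhat (N / l) (l * θ) * ((χ ((l : ℝ) ^ 2 * θ) : ℝ) : ℂ) * e2pi (x * θ) with hk
  set U : ℂ := Ups y b (a : ℤ) q * e2pi ((x : ℝ) * ((a : ℝ) / (q : ℝ))) with hU
  have hf : ∀ ξ : ℝ, Lhat χ y b N a q ξ * e2pi ((x : ℝ) * ξ) = U * k (ξ - a / q) := by
    intro ξ
    simp only [Lhat, hk, hU, ← hl]
    rw [show (x : ℝ) * ξ = x * (a / q) + x * (ξ - a / q) by ring, e2pi_add]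
    ring
  have hkc : Continuous k :=
    (((continuous_Mhat _).comp (by fun_prop)).mul
      (Complex.continuous_ofReal.comp (hχs.continuous.comp (by fun_prop)))).mul
        (continuous_e2pi.comp (by fun_prop))
  have hk0 : ∀ θ : ℝ, 1 / (4 * (l : ℝ) ^ 2) < |θ| → k θ = 0 := by
    intro θ hθ
    have : χ ((l : ℝ) ^ 2 * θ) = 0 := by
      refine hχ0 _ fun h => ?_
      have h1 : |(l : ℝ) ^ 2 * θ| ≤ 1 / 4 := abs_le.2 h
      rw [abs_mul, abs_of_pos (by positivity)] at h1
      rw [div_lt_iff₀ (by positivity)] at hθ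
      linarith
    simp [hk, this]
  have hkcs : HasCompactSupport k := by
    refine HasCompactSupport.intro
      (isCompact_Icc (a := -(1 / (4 * (l : ℝ) ^ 2))) (b := 1 / (4 * (l : ℝ) ^ 2))) fun θ hθ => ?_
    refine hk0 θ ?_
    by_contra h
    exact hθ (abs_le.1 (not_lt.1 h))
  have hki : MeasureTheory.Integrable k := hkc.integrable_of_hasCompactSupport hkcs
  have hsmall : 1 / (4 * (l : ℝ) ^ 2) < 1 / q := by
    have h1 : (q : ℝ) ≤ l := by exact_mod_cast hql
    have h2 : (1 : ℝ) ≤ q := by exact_mod_cast hq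
    exact one_div_lt_one_div_of_lt hq0 (by nlinarith)
  have hint : ∀ c d : ℝ, ∫ ξ in c..d, Lhat χ y b N a q ξ * e2pi ((x : ℝ) * ξ) =
      U * ∫ θ in (c - a / q)..(d - a / q), k θ := by
    intro c d
    simp only [hf]
    rw [intervalIntegral.integral_const_mul, intervalIntegral.integral_comp_sub_right]
  have ha1 : 1 / (q : ℝ) ≤ a / q := by
    have : (1 : ℝ) ≤ a := by exact_mod_cast ha
    gcongr
  have haq1 : (a : ℝ) / q ≤ 1 := by
    rw [div_le_one hq0]; exact_mod_cast haq
  have hsplit : ∫ θ in (0 - (a : ℝ) / q)..(1 - a / q), k θ =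
      (∫ θ, k θ) - ∫ θ in Set.Ioi (1 - (a : ℝ) / q), k θ := by
    have h1 := MeasureTheory.integral_add_compl (measurableSet_Ioi (a := 1 - (a : ℝ) / q)) hki
    rw [Set.compl_Ioi] at h1
    have h2 := intervalIntegral.integral_Iic_sub_Iic (f := k) (a := 0 - (a : ℝ) / q)
      (b := 1 - (a : ℝ) / q) hki.integrableOn hki.integrableOn
    have h3 : ∫ θ in Set.Iic (0 - (a : ℝ) / q), k θ = 0 := by
      refine MeasureTheory.setIntegral_eq_zero_of_forall_eq_zero fun θ hθ => hk0 θ ?_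
      rw [Set.mem_Iic] at hθ
      rw [abs_of_nonpos (by linarith [one_div_pos.2 hq0])]
      linarith
    rw [← h2, h3, ← h1]
    ring
  rw [Lker, hint, hsplit, mul_sub]
  congr 1
  · rw [mul_comm]; rfl
  split_ifs with hq1
  · subst hq1
    obtain rfl : a = 1 := by omega
    have hly : l = y := by rw [hl]; exact Nat.lcm_one_right y
    have hU' : U = Ups y b 1 1 := by
      have : e2pi (x : ℝ) = 1 := e2pi_intCast x
      simp [hU, this]
    rw [hU', halfLineKernel, hk, hly]
    simp
  · have hlt : a < q := by
      refine lt_of_le_of_ne haq fun h => hq1 ?_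
      rw [h, Nat.gcd_self] at hcop
      exact hcop
    have h1 : 1 / (q : ℝ) ≤ 1 - a / q := by
      have : (a : ℝ) + 1 ≤ q := by exact_mod_cast hlt
      rw [le_sub_iff_add_le, ← add_div, div_le_one hq0]
      linarith
    rw [MeasureTheory.setIntegral_eq_zero_of_forall_eq_zero, mul_zero]
    intro θ hθ
    rw [Set.mem_Ioi] at hθ
    refine hk0 θ ?_
    rw [abs_of_pos (by linarith [one_div_pos.2 hq0])]
    linarith

lemma norm_Mhat_le {x : ℝ} (hx : 1 ≤ x) (θ : ℝ) : ‖Mhat x θ‖ ≤ 2 := by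
  have hx0 : 0 < x := by linarith
  rw [Mhat, norm_mul, Complex.norm_real, Real.norm_eq_abs, abs_of_pos (by positivity)]
  have h1 : ‖∑ n ∈ Finset.range ⌈x⌉₊, e2pi (-(n * θ))‖ ≤ ⌈x⌉₊ := by
    refine (norm_sum_le _ _).trans ?_
    simp [norm_e2pi]
  have h2 := (Nat.ceil_lt_add_one hx0.le).le
  rw [div_mul_eq_mul_div, div_le_iff₀ hx0]
  linarith

lemma four_mul_le_norm_one_sub_e2pi {θ : ℝ} (h0 : 0 ≤ θ) (h1 : θ ≤ 1 / 2) :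
    4 * θ ≤ ‖1 - e2pi (-θ)‖ := by
  have hmul : (1 - e2pi (-θ)) * e2pi (θ / 2) = 2 * Complex.I * (Real.sin (Real.pi * θ) : ℂ) := by
    rw [sub_mul, one_mul, ← e2pi_add, Complex.ofReal_sin, Complex.sin, e2pi, e2pi]
    push_cast
    rw [show (2 * Real.pi * Complex.I * (θ / 2) : ℂ) = Real.pi * θ * Complex.I by ring,
      show (2 * Real.pi * Complex.I * (-θ + θ / 2) : ℂ) = -(Real.pi * θ) * Complex.I by ring]
    have := Complex.I_mul_I
    linear_combination (-Complex.exp (-(Real.pi * θ) * Complex.I) +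
      Complex.exp (Real.pi * θ * Complex.I)) * this
  have h2 : ‖1 - e2pi (-θ)‖ = 2 * |Real.sin (Real.pi * θ)| := by
    have := congrArg norm hmul
    rw [norm_mul, norm_e2pi, mul_one, norm_mul, norm_mul, Complex.norm_I, Complex.norm_real,
      Complex.norm_ofNat, mul_one, Real.norm_eq_abs] at this
    exact this
  rw [h2]
  have h3 := Real.mul_le_sin (x := Real.pi * θ) (by positivity) (by nlinarith [Real.pi_pos])
  rw [show 2 / Real.pi * (Real.pi * θ) = 2 * θ by field_simp] at h3
  have h4 := le_abs_self (Real.sin (Real.pi * θ))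
  linarith

lemma norm_Mhat_mul_le {x : ℝ} (hx : 0 < x) {θ : ℝ} (h0 : 0 ≤ θ) (h1 : θ ≤ 1 / 2) :
    ‖Mhat x θ‖ * (2 * (x * θ)) ≤ 1 := by
  have h2 := four_mul_le_norm_one_sub_e2pi h0 h1
  have hpow : ∀ n : ℕ, e2pi (-(n * θ)) = e2pi (-θ) ^ n := fun n => by
    rw [← e2pi_nat_mul]; congr 1; ring
  have h3 : ‖∑ n ∈ Finset.range ⌈x⌉₊, e2pi (-(n * θ))‖ * ‖1 - e2pi (-θ)‖ ≤ 2 := by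
    simp only [hpow]
    rw [← norm_mul, geom_sum_mul_neg]
    refine (norm_sub_le _ _).trans ?_
    rw [norm_pow, norm_e2pi, norm_one, one_pow]
    norm_num
  rw [Mhat, norm_mul, Complex.norm_real, Real.norm_eq_abs, abs_of_pos (by positivity)]
  set S := ‖∑ n ∈ Finset.range ⌈x⌉₊, e2pi (-(n * θ))‖
  calc 1 / x * S * (2 * (x * θ)) = S * (4 * θ) / 2 := by field_simp; ring
    _ ≤ S * ‖1 - e2pi (-θ)‖ / 2 := by gcongr
    _ ≤ 1 := by linarith

lemma integral_e2pi_int_mul (m : ℤ) :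
    ∫ θ in (0 : ℝ)..1, e2pi (m * θ) = if m = 0 then 1 else 0 := by
  split_ifs with h
  · subst h
    simp
  · have hm : (2 * Real.pi * Complex.I * m : ℂ) ≠ 0 :=
      mul_ne_zero Complex.two_pi_I_ne_zero (by exact_mod_cast h)
    have h1 := integral_exp_mul_complex (a := 0) (b := 1) hm
    have h2 : ∀ θ : ℝ, e2pi (m * θ) = Complex.exp (2 * Real.pi * Complex.I * m * θ) := by
      intro θ
      rw [e2pi]
      push_cast
      ring_nf
    simp only [h2]
    rw [h1]
    have h3 : Complex.exp (2 * Real.pi * Complex.I * m * (1 : ℝ)) = 1 := by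
      rw [← h2, mul_one, e2pi_intCast]
    rw [h3]
    simp

lemma integral_norm_sq_trigSum (F : Finset ℤ) (x : ℤ) :
    ∫ θ in (0 : ℝ)..1, ‖∑ z ∈ F, e2pi (((x - z : ℤ) : ℝ) * θ)‖ ^ 2 = F.card := by
  have hconj : ∀ t : ℝ, (starRingEnd ℂ) (e2pi t) = e2pi (-t) := by
    intro t
    rw [e2pi, e2pi, ← Complex.exp_conj]
    simp [Complex.conj_ofNat]
  have h1 : ∀ θ : ℝ, ((‖∑ z ∈ F, e2pi (((x - z : ℤ) : ℝ) * θ)‖ ^ 2 : ℝ) : ℂ) =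
      ∑ z ∈ F, ∑ w ∈ F, e2pi ((w - z : ℤ) * θ) := by
    intro θ
    push_cast
    rw [← Complex.mul_conj', map_sum, Finset.sum_mul_sum]
    refine Finset.sum_congr rfl fun z _ => Finset.sum_congr rfl fun w _ => ?_
    rw [hconj, ← e2pi_add]
    congr 1
    ring
  have hc : ∀ m : ℤ, Continuous fun θ : ℝ => e2pi (m * θ) := fun m =>
    continuous_e2pi.comp (by fun_prop)
  have h2 : ((∫ θ in (0 : ℝ)..1, ‖∑ z ∈ F, e2pi (((x - z : ℤ) : ℝ) * θ)‖ ^ 2 : ℝ) : ℂ) =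
      (F.card : ℂ) := by
    rw [← intervalIntegral.integral_ofReal]
    simp only [h1]
    rw [intervalIntegral.integral_finsetSum fun z _ =>
      (continuous_finsetSum _ fun w _ => hc _).intervalIntegrable _ _]
    have h3 : ∀ z ∈ F, ∫ θ in (0 : ℝ)..1, ∑ w ∈ F, e2pi ((w - z : ℤ) * θ) = 1 := by
      intro z hz
      rw [intervalIntegral.integral_finsetSum fun w _ => (hc _).intervalIntegrable _ _]
      simp only [integral_e2pi_int_mul, sub_eq_zero]
      rw [Finset.sum_ite_eq' F z, if_pos hz]
    rw [Finset.sum_congr rfl h3]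
    simp
  exact_mod_cast h2

lemma integral_inv_one_add_mul_rpow_le {r N : ℝ} (hr : 1 < r) (hN : 0 < N) :
    ∫ θ in (0 : ℝ)..1, (3 * (1 + N * |θ|)⁻¹) ^ r ≤ 3 ^ r / (r - 1) * N⁻¹ := by
  have h1 : ∫ θ in (0 : ℝ)..1, (3 * (1 + N * |θ|)⁻¹) ^ r =
      ∫ θ in (0 : ℝ)..1, 3 ^ r * (1 + N * θ) ^ (-r) := by
    refine intervalIntegral.integral_congr fun θ hθ => ?_
    rw [Set.uIcc_of_le zero_le_one] at hθ
    have h0 : 0 ≤ 1 + N * θ := by have := hθ.1; positivity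
    rw [abs_of_nonneg hθ.1, Real.mul_rpow (by norm_num) (by positivity), Real.inv_rpow h0,
      Real.rpow_neg h0]
  have h2 := intervalIntegral.integral_comp_add_mul (a := 0) (b := 1) (fun t : ℝ => t ^ (-r)) hN.ne' 1
  rw [h1, intervalIntegral.integral_const_mul, h2, mul_zero, add_zero, mul_one, smul_eq_mul,
    integral_rpow]
  · rw [Real.one_rpow]
    have h3 : 0 ≤ (1 + N) ^ (-r + 1) := by positivity
    have h4 : ((1 + N) ^ (-r + 1) - 1) / (-r + 1) ≤ 1 / (r - 1) := by
      rw [show -r + 1 = -(r - 1) by ring] at h3 ⊢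
      rw [div_neg, ← neg_div]
      have : 0 < r - 1 := by linarith
      gcongr
      linarith
    calc 3 ^ r * (N⁻¹ * (((1 + N) ^ (-r + 1) - 1) / (-r + 1)))
        ≤ 3 ^ r * (N⁻¹ * (1 / (r - 1))) := by gcongr
      _ = 3 ^ r / (r - 1) * N⁻¹ := by ring
  · right
    refine ⟨by linarith, fun h => ?_⟩
    rw [Set.uIcc_of_le (by linarith)] at h
    linarith [h.1]

lemma norm_Mhat_mul_cutoff_le {χ : ℝ → ℝ} (hχr : ∀ x : ℝ, χ x ∈ Set.Icc (0 : ℝ) 1)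
    (hχ0 : ∀ x : ℝ, x ∉ Set.Icc (-(1/4) : ℝ) (1/4) → χ x = 0) {y : ℕ} (hy : 0 < y) {N : ℝ}
    (hN : (y : ℝ) ≤ N) {θ : ℝ} (hθ : 0 ≤ θ) :
    ‖Mhat (N / y) (y * θ) * ((χ ((y : ℝ) ^ 2 * θ) : ℝ) : ℂ)‖ ≤ 3 * (1 + N * |θ|)⁻¹ := by
  have hy1 : (1 : ℝ) ≤ y := by exact_mod_cast hy
  have hy0 : (0 : ℝ) < y := by linarith
  have hN0 : 0 < N := by linarith
  rw [abs_of_nonneg hθ]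
  by_cases hz : (y : ℝ) ^ 2 * θ ∈ Set.Icc (-(1/4) : ℝ) (1/4)
  · have h1 : (1 : ℝ) ≤ N / y := by rwa [one_le_div hy0]
    have h2 : (y : ℝ) * θ ≤ 1 / 2 := by
      have := hz.2
      nlinarith [mul_nonneg hy0.le hθ]
    have h3 := norm_Mhat_le h1 (y * θ)
    have h4 := norm_Mhat_mul_le (x := N / y) (by linarith) (by positivity) h2
    rw [show N / y * (y * θ) = N * θ by field_simp] at h4
    have h5 := hχr ((y : ℝ) ^ 2 * θ)
    rw [norm_mul, Complex.norm_real, Real.norm_eq_abs, abs_of_nonneg h5.1, ← div_eq_mul_inv,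
      le_div_iff₀ (by positivity)]
    have h6 : ‖Mhat (N / y) (y * θ)‖ * χ ((y : ℝ) ^ 2 * θ) ≤ ‖Mhat (N / y) (y * θ)‖ :=
      mul_le_of_le_one_right (norm_nonneg _) h5.2
    have h7 : 0 ≤ 1 + N * θ := by positivity
    have h8 := mul_le_mul_of_nonneg_right h6 h7
    linarith
  · rw [hχ0 _ hz]
    simp only [Complex.ofReal_zero, mul_zero, norm_zero]
    positivity

lemma norm_sum_halfLineKernel_le {χ : ℝ → ℝ} (hχs : ContDiff ℝ (⊤ : ℕ∞) χ)
    (hχr : ∀ x : ℝ, χ x ∈ Set.Icc (0 : ℝ) 1)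
    (hχ0 : ∀ x : ℝ, x ∉ Set.Icc (-(1/4) : ℝ) (1/4) → χ x = 0) {r : ℝ} (hr : 1 < r) (hr2 : r < 2)
    {y : ℕ} (hy : 0 < y) {N : ℝ} (hN : (y : ℝ) ≤ N) (F : Finset ℤ) (x : ℤ) :
    ‖∑ z ∈ F, halfLineKernel χ N y ((x - z : ℤ) : ℝ)‖ ≤
      (3 ^ r / (r - 1) * N⁻¹) ^ (1 / r) * (F.card : ℝ) ^ (1 / r) := by
  have hy1 : (1 : ℝ) ≤ y := by exact_mod_cast hy
  have hN0 : 0 < N := by linarith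
  set k : ℝ → ℂ := fun θ => Mhat (N / y) (y * θ) * ((χ ((y : ℝ) ^ 2 * θ) : ℝ) : ℂ) with hk
  set T : ℝ → ℂ := fun θ => ∑ z ∈ F, e2pi (((x - z : ℤ) : ℝ) * θ) with hT
  set g : ℝ → ℝ := fun θ => 3 * (1 + N * |θ|)⁻¹ with hg
  have hkc : Continuous k := ((continuous_Mhat _).comp (by fun_prop)).mul
    (Complex.continuous_ofReal.comp (hχs.continuous.comp (by fun_prop)))
  have hec : ∀ m : ℤ, Continuous fun θ : ℝ => e2pi (m * θ) := fun m =>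
    continuous_e2pi.comp (by fun_prop)
  have hTc : Continuous T := continuous_finsetSum _ fun z _ => hec _
  have hgc : Continuous g :=
    continuous_const.mul (Continuous.inv₀ (by fun_prop) fun θ => by positivity)
  have hk0 : ∀ θ : ℝ, 1 < θ → k θ = 0 := by
    intro θ hθ
    have : χ ((y : ℝ) ^ 2 * θ) = 0 := hχ0 _ fun h => by nlinarith [h.2]
    simp [hk, this]
  have hker : ∀ m : ℤ, halfLineKernel χ N y m = ∫ θ in (0 : ℝ)..1, k θ * e2pi (m * θ) := by
    intro m
    rw [halfLineKernel, intervalIntegral.integral_of_le zero_le_one]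
    refine (MeasureTheory.setIntegral_eq_of_subset_of_forall_sdiff_eq_zero measurableSet_Ioi
      Set.Ioc_subset_Ioi_self fun θ hθ => ?_)
    have : 1 < θ := by
      by_contra h
      exact hθ.2 ⟨hθ.1, not_lt.1 h⟩
    exact mul_eq_zero_of_left (hk0 θ this) _
  have hsum : ∑ z ∈ F, halfLineKernel χ N y ((x - z : ℤ) : ℝ) =
      ∫ θ in (0 : ℝ)..1, k θ * T θ := by
    have hkec : ∀ m : ℤ, Continuous fun θ : ℝ => k θ * e2pi (m * θ) := fun m => hkc.mul (hec m)
    simp only [hker, hT, Finset.mul_sum]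
    rw [intervalIntegral.integral_finsetSum fun z _ => (hkec _).intervalIntegrable _ _]
  have hT0 : ∀ θ, ‖T θ‖ ≤ F.card := by
    intro θ
    refine (norm_sum_le _ _).trans ?_
    simp [norm_e2pi]
  have hg0 : ∀ θ, 0 ≤ g θ := fun θ => by positivity
  have hg3 : ∀ θ, ‖g θ‖ ≤ 3 := by
    intro θ
    rw [Real.norm_eq_abs, abs_of_nonneg (hg0 θ)]
    have : (1 + N * |θ|)⁻¹ ≤ 1 := inv_le_one_of_one_le₀ (by
      have : 0 ≤ N * |θ| := by positivity
      linarith)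
    simp only [hg]
    linarith
  set q : ℝ := r / (r - 1) with hq
  have hr0 : 0 < r - 1 := by linarith
  have hpq : r.HolderConjugate q := Real.HolderConjugate.conjExponent hr
  have hq2 : 2 ≤ q := by rw [hq, le_div_iff₀ hr0]; linarith
  have hle : ‖∫ θ in (0 : ℝ)..1, k θ * T θ‖ ≤ ∫ θ in (0 : ℝ)..1, g θ * ‖T θ‖ := by
    refine intervalIntegral.norm_integral_le_of_norm_le zero_le_one
      (Filter.Eventually.of_forall fun θ hθ => ?_) ((hgc.mul hTc.norm).intervalIntegrable _ _)
    rw [norm_mul]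
    exact mul_le_mul_of_nonneg_right (norm_Mhat_mul_cutoff_le hχr hχ0 hy hN hθ.1.le)
      (norm_nonneg _)
  have hH : ∫ θ in (0 : ℝ)..1, g θ * ‖T θ‖ ≤
      (∫ θ in (0 : ℝ)..1, g θ ^ r) ^ (1 / r) * (∫ θ in (0 : ℝ)..1, ‖T θ‖ ^ q) ^ (1 / q) := by
    simp only [intervalIntegral.integral_of_le zero_le_one]
    refine MeasureTheory.integral_mul_le_Lp_mul_Lq_of_nonneg hpq
      (Filter.Eventually.of_forall hg0) (Filter.Eventually.of_forall fun θ => norm_nonneg _)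
      (MeasureTheory.MemLp.of_bound hgc.aestronglyMeasurable 3 (Filter.Eventually.of_forall hg3))
      (MeasureTheory.MemLp.of_bound hTc.norm.aestronglyMeasurable F.card
        (Filter.Eventually.of_forall fun θ => ?_))
    rw [norm_norm]
    exact hT0 θ
  have hTq : ∫ θ in (0 : ℝ)..1, ‖T θ‖ ^ q ≤ (F.card : ℝ) ^ (q - 1) := by
    have hc0 : (0 : ℝ) ≤ F.card := Nat.cast_nonneg _
    calc ∫ θ in (0 : ℝ)..1, ‖T θ‖ ^ q
        ≤ ∫ θ in (0 : ℝ)..1, (F.card : ℝ) ^ (q - 2) * ‖T θ‖ ^ 2 := by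
          refine intervalIntegral.integral_mono_on zero_le_one
            ((hTc.norm.rpow_const fun _ => Or.inr (by linarith)).intervalIntegrable _ _)
            ((continuous_const.mul (hTc.norm.pow 2)).intervalIntegrable _ _) fun θ _ => ?_
          have h1 : ‖T θ‖ ^ q = ‖T θ‖ ^ (q - 2) * ‖T θ‖ ^ 2 := by
            rw [← Real.rpow_natCast, ← Real.rpow_add_of_nonneg (norm_nonneg _) (by linarith)
              (by norm_num)]
            norm_num
          rw [h1]
          exact mul_le_mul_of_nonneg_right
            (Real.rpow_le_rpow (norm_nonneg _) (hT0 θ) (by linarith)) (by positivity)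
      _ = (F.card : ℝ) ^ (q - 1) := by
          rw [intervalIntegral.integral_const_mul, integral_norm_sq_trigSum]
          nth_rewrite 2 [← Real.rpow_one (F.card : ℝ)]
          rw [← Real.rpow_add_of_nonneg hc0 (by linarith) zero_le_one]
          ring_nf
  have hqr : (q - 1) * (1 / q) = 1 / r := by rw [hq]; field_simp; ring
  rw [hsum]
  refine hle.trans (hH.trans ?_)
  refine mul_le_mul (Real.rpow_le_rpow ?_ (integral_inv_one_add_mul_rpow_le hr hN0) (by positivity))
    ?_ (Real.rpow_nonneg ?_ _) (by positivity)
  · exact intervalIntegral.integral_nonneg zero_le_one fun θ _ => Real.rpow_nonneg (hg0 θ) _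
  · rw [← hqr, Real.rpow_mul (Nat.cast_nonneg _)]
    exact Real.rpow_le_rpow (intervalIntegral.integral_nonneg zero_le_one fun θ _ => by positivity)
      hTq (by positivity)
  · exact intervalIntegral.integral_nonneg zero_le_one fun θ _ => by positivity

lemma dvd_sub_of_dvd_sub_dvd {y m : ℕ} (hcop : y.Coprime m) {b u v : ℤ} (hu : (y : ℤ) ∣ u - b)
    (hv : (y : ℤ) ∣ v - b) (hmu : (m : ℤ) ∣ u) (hmv : (m : ℤ) ∣ v) :
    u ≡ v [ZMOD ((y * m : ℕ) : ℤ)] := by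
  refine (Int.modEq_iff_dvd.2 ?_).symm
  push_cast
  refine IsCoprime.mul_dvd (Nat.isCoprime_iff_coprime.2 hcop) ?_ (dvd_sub hmu hmv)
  have := dvd_sub hu hv
  rwa [sub_sub_sub_cancel_right] at this

lemma card_filter_dvd_sub_le {y m N : ℕ} (hy : 0 < y) (hm : 0 < m) (hcop : y.Coprime m)
    (hN : y * m ≤ N) (b x : ℤ) {F : Finset ℤ} (hF : ∀ z ∈ F, z ∈ Set.Icc (0 : ℤ) N) :
    (((F.filter (fun z => (y : ℤ) ∣ x - z - b)).filter
      (fun z => (m : ℤ) ∣ x - z)).card : ℝ) ≤ 3 * N / y * (m : ℝ)⁻¹ := by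
  set G := (F.filter (fun z => (y : ℤ) ∣ x - z - b)).filter (fun z => (m : ℤ) ∣ x - z) with hG
  have hmem : ∀ z, z ∈ G ↔ (z ∈ F ∧ (y : ℤ) ∣ x - z - b) ∧ (m : ℤ) ∣ x - z := fun z => by
    rw [hG, Finset.mem_filter, Finset.mem_filter]
  obtain hE | ⟨w, hw⟩ := G.eq_empty_or_nonempty
  · rw [hE]
    simp only [Finset.card_empty, Nat.cast_zero]
    positivity
  rw [hmem] at hw
  have hk : (0 : ℤ) < ((y * m : ℕ) : ℤ) := by exact_mod_cast Nat.mul_pos hy hm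
  have h1 := card_filter_modEq_le (w := x) (N := N) hk (by exact_mod_cast hN) (x - w)
  have h2 : G.card ≤ ((Finset.Ioc (x - N - 1) x).filter
      (fun u => u ≡ x - w [ZMOD ((y * m : ℕ) : ℤ)])).card := by
    refine Finset.card_le_card_of_injOn (fun z => x - z) (fun z hz => ?_)
      fun z _ z' _ h => sub_right_injective h
    rw [Finset.mem_coe, hmem] at hz
    have h3 := hF z hz.1.1
    rw [Finset.mem_coe, Finset.mem_filter, Finset.mem_Ioc]
    refine ⟨⟨by have := h3.2; lia, by have := h3.1; lia⟩, ?_⟩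
    exact dvd_sub_of_dvd_sub_dvd hcop hz.1.2 hw.1.2 hz.2 hw.2
  have h4 : (G.card : ℝ) ≤ 3 * N * (((y * m : ℕ) : ℤ) : ℝ)⁻¹ :=
    (Nat.cast_le.2 h2).trans (by exact_mod_cast h1)
  refine h4.trans (le_of_eq ?_)
  push_cast
  rw [mul_inv, div_eq_mul_inv]
  ring

lemma div_le_mul_rpow_of_pow_le {T A B v ρ : ℝ} {K : ℕ} (hA : 0 < A) (hB : 0 ≤ B)
    (hv : 0 ≤ v) (hvA : v ≤ A) (hρ : 0 < ρ) (hρK : ρ * (K + 1) ≤ K)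
    (h : T ^ (K + 1) ≤ v ^ K * (B ^ (K + 1) * A)) : T / A ≤ B * (v / A) ^ ρ := by
  have hu : 0 ≤ v / A := by positivity
  have hu1 : v / A ≤ 1 := (div_le_one hA).2 hvA
  refine le_of_pow_le_pow_left₀ (Nat.succ_ne_zero K) (by positivity) ?_
  have h1 : (v / A) ^ K ≤ ((v / A) ^ ρ) ^ (K + 1) := by
    rw [← Real.rpow_natCast, ← Real.rpow_natCast, ← Real.rpow_mul hu]
    rcases hu.eq_or_lt with h0 | h0
    · rw [← h0]
      rcases Nat.eq_zero_or_pos K with rfl | hK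
      · norm_num at hρK; linarith
      · rw [Real.zero_rpow (by positivity), Real.zero_rpow (by positivity)]
    · refine Real.rpow_le_rpow_of_exponent_ge h0 hu1 ?_
      push_cast
      exact hρK
  calc (T / A) ^ (K + 1) = T ^ (K + 1) / A ^ (K + 1) := div_pow _ _ _
    _ ≤ v ^ K * (B ^ (K + 1) * A) / A ^ (K + 1) := by gcongr
    _ = B ^ (K + 1) * (v / A) ^ K := by rw [div_pow]; field_simp; ring
    _ ≤ B ^ (K + 1) * ((v / A) ^ ρ) ^ (K + 1) := by gcongr
    _ = (B * (v / A) ^ ρ) ^ (K + 1) := (mul_pow _ _ _).symm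

lemma exists_sum_ramanujanSum_le {ε ρ : ℝ} (hε : 0 < ε) (hρ : 0 < ρ) {K : ℕ}
    (hρK : ρ * (K + 1) ≤ K) :
    ∃ C : ℝ, 0 < C ∧ ∀ y n N : ℕ, 0 < y → 0 < n → y * n ^ (K + 1) ≤ N →
      ∀ D ⊆ Finset.Icc 1 n, (∀ h ∈ D, ∀ d, d ∣ h → d ∈ D) → (∀ h ∈ D, y.Coprime h) →
      ∀ (b x : ℤ) (F : Finset ℤ), (∀ z ∈ F, z ∈ Set.Icc (0 : ℤ) N) →
        (y : ℝ) / N * ∑ z ∈ F.filter (fun z => (y : ℤ) ∣ x - z - b),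
          ∑ h ∈ D, (Nat.totient h : ℝ)⁻¹ * ‖ramanujanSum h (x - z)‖ ≤
        C * (n : ℝ) ^ ε * ((y : ℝ) / N * F.card) ^ ρ := by
  obtain ⟨c, hc1, hc⟩ := exists_card_divisors_le (ε := ε / (4 * (K + 1))) (by positivity)
  refine ⟨3 * (c * (1 + 1 / (ε / 4))) ^ 2, by positivity, ?_⟩
  intro y n N hy hn hN D hD hDd hDy b x F hF
  have hn1 : (1 : ℝ) ≤ n := by exact_mod_cast hn
  have hn0 : (0 : ℝ) < n := by linarith
  have hy0 : (0 : ℝ) < y := by exact_mod_cast hy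
  have hN0 : (0 : ℝ) < N := by
    have : 0 < N := lt_of_lt_of_le (by positivity) hN
    exact_mod_cast this
  have hlog : 0 ≤ 1 + Real.log n := by
    have := Real.log_nonneg hn1
    linarith
  set B' : ℝ := c * (n : ℝ) ^ (ε / 4) with hB'
  have hτ : ∀ m : ℕ, 0 < m → (m : ℝ) ≤ (n : ℝ) ^ (K + 1) → (m.divisors.card : ℝ) ≤ B' := by
    intro m hm hmn
    refine (hc m hm).trans (mul_le_mul_of_nonneg_left ?_ (by linarith))
    refine (Real.rpow_le_rpow (Nat.cast_nonneg m) hmn (by positivity)).trans (le_of_eq ?_)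
    rw [← Real.rpow_natCast, ← Real.rpow_mul hn0.le]
    congr 1
    push_cast
    field_simp
  set B : ℝ := B' * (1 + Real.log n) with hB
  have hB0 : 0 ≤ B := by positivity
  have hBle : B ≤ c * (1 + 1 / (ε / 4)) * (n : ℝ) ^ (ε / 2) := by
    have h1 := one_add_log_le (δ := ε / 4) (by positivity) hn1
    calc B ≤ B' * ((1 + 1 / (ε / 4)) * (n : ℝ) ^ (ε / 4)) := by
          rw [hB]; gcongr
      _ = c * (1 + 1 / (ε / 4)) * ((n : ℝ) ^ (ε / 4) * (n : ℝ) ^ (ε / 4)) := by rw [hB']; ring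
      _ = _ := by rw [← Real.rpow_add hn0]; ring_nf
  set V := F.filter (fun z => (y : ℤ) ∣ x - z - b) with hV
  set t : ℤ → ℝ := fun z => ((D.filter (fun d : ℕ => (d : ℤ) ∣ x - z)).card : ℝ) with ht
  have ht0 : ∀ z, 0 ≤ t z := fun z => Nat.cast_nonneg _
  have hS : ∑ z ∈ V, ∑ h ∈ D, (Nat.totient h : ℝ)⁻¹ * ‖ramanujanSum h (x - z)‖ ≤
      B * ∑ z ∈ V, t z := by
    rw [Finset.mul_sum]
    refine Finset.sum_le_sum fun z _ =>
      sum_inv_totient_mul_norm_ramanujanSum_le hD hDd (fun m hm => ?_) (x - z)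
    rw [Finset.mem_Icc] at hm
    refine hτ m hm.1 ?_
    have h1 : (m : ℝ) ≤ n := by exact_mod_cast hm.2
    exact h1.trans (le_self_pow₀ hn1 (Nat.succ_ne_zero K))
  set A : ℝ := 3 * N / y with hA
  have hA0 : 0 < A := by positivity
  have hcount : ∀ m : ℕ, 0 < m → y.Coprime m → (m : ℝ) ≤ (n : ℝ) ^ (K + 1) →
      ((V.filter (fun z => (m : ℤ) ∣ x - z)).card : ℝ) ≤ A * (m : ℝ)⁻¹ := by
    intro m hm hym hmn
    refine card_filter_dvd_sub_le hy hm hym ?_ b x hF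
    have : m ≤ n ^ (K + 1) := by exact_mod_cast hmn
    exact (Nat.mul_le_mul_left y this).trans hN
  have hpow : ∑ z ∈ V, t z ^ (K + 1) ≤ B ^ (K + 1) * A := by
    have h1 := sum_card_divisors_in_pow_le V (fun z => x - z) hD (P := fun m => y.Coprime m)
      (fun m hm d hd => (Nat.Coprime.mul_right hm (hDy d hd)).coprime_dvd_right
        (Nat.lcm_dvd_mul m d)) hA0.le hB0
      (fun m hm hmn => mul_le_mul_of_nonneg_right (hτ m hm hmn) hlog) hcount (K + 1) 1
      one_pos (Nat.coprime_one_right y) (by simp)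
    simpa using h1
  have hVA : (V.card : ℝ) ≤ A := by
    have := hcount 1 one_pos (Nat.coprime_one_right y) (by
      rw [Nat.cast_one]; exact one_le_pow₀ hn1)
    simpa using this
  have hVF : (V.card : ℝ) ≤ F.card := by exact_mod_cast Finset.card_filter_le _ _
  have hT := div_le_mul_rpow_of_pow_le (T := ∑ z ∈ V, t z) (K := K) hA0 hB0
    (Nat.cast_nonneg V.card) hVA hρ hρK
    ((pow_sum_le_card_mul_sum_pow (fun z _ => ht0 z) K).trans (by gcongr))
  have hvle : (V.card : ℝ) / A ≤ (y : ℝ) / N * F.card := by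
    rw [hA, div_div_eq_mul_div, div_mul_eq_mul_div, div_le_div_iff₀ (by positivity) hN0]
    have h1 : (V.card : ℝ) * y * N ≤ F.card * y * N := by gcongr
    have h2 : 0 ≤ (F.card : ℝ) * y * N := by positivity
    linarith
  calc (y : ℝ) / N * ∑ z ∈ V, ∑ h ∈ D, (Nat.totient h : ℝ)⁻¹ * ‖ramanujanSum h (x - z)‖
      ≤ (y : ℝ) / N * (B * ∑ z ∈ V, t z) := by gcongr
    _ = 3 * B * ((∑ z ∈ V, t z) / A) := by rw [hA]; field_simp
    _ ≤ 3 * B * (B * ((V.card : ℝ) / A) ^ ρ) := by gcongr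
    _ ≤ 3 * B * (B * ((y : ℝ) / N * F.card) ^ ρ) := by gcongr
    _ = 3 * B ^ 2 * ((y : ℝ) / N * F.card) ^ ρ := by ring
    _ ≤ 3 * (c * (1 + 1 / (ε / 4)) * (n : ℝ) ^ (ε / 2)) ^ 2 *
        ((y : ℝ) / N * F.card) ^ ρ := by gcongr
    _ = _ := by
      rw [mul_pow, ← Real.rpow_natCast ((n : ℝ) ^ (ε / 2)), ← Real.rpow_mul hn0.le]
      push_cast
      rw [div_mul_cancel₀ ε two_ne_zero]
      ring

lemma Ups_one_one {y : ℕ} (hy : 0 < y) (b : ℤ) : Ups y b 1 1 = 1 := by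
  have h1 : e2pi (-1) = 1 := by simpa using e2pi_intCast (-1)
  have h2 : (Nat.totient y : ℂ) ≠ 0 := by exact_mod_cast (Nat.totient_pos.2 hy).ne'
  simp [Ups, h1, h2]

lemma LoK_eq {χ : ℝ → ℝ} (hχs : ContDiff ℝ (⊤ : ℕ∞) χ)
    (hχ0 : ∀ x : ℝ, x ∉ Set.Icc (-(1/4) : ℝ) (1/4) → χ x = 0) {y : ℕ} (hy : 0 < y) {b : ℤ}
    (hb : IsCoprime b y) (N : ℕ) (Q : ℝ) (x : ℤ) :
    LoK χ y b N Q x =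
      (∑ h ∈ (Finset.Icc 1 ⌈Q⌉₊).filter (fun h : ℕ => (h : ℝ) < Q ∧ y.Coprime h),
        lineKernel χ N (y * h) x * (((Nat.totient h : ℂ))⁻¹ *
          (ArithmeticFunction.moebius h * ramanujanSum h x) *
          if (y : ℤ) ∣ x - b then (y : ℂ) else 0)) -
      if 1 ∈ (Finset.Icc 1 (y * ⌈Q⌉₊)).filter (fun q : ℕ => (hgt y q : ℝ) < Q) then
        halfLineKernel χ N y x else 0 := by
  rw [← sum_low_denominators hy hb Q x fun l => lineKernel χ N l x, LoK]
  have h1 : ∀ q ∈ (Finset.Icc 1 (y * ⌈Q⌉₊)).filter (fun q : ℕ => (hgt y q : ℝ) < Q),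
      ∑ a ∈ (Finset.Icc 1 q).filter (fun a : ℕ => Nat.gcd a q = 1), Lker χ y b N a q x =
      (∑ a ∈ (Finset.Icc 1 q).filter (fun a : ℕ => Nat.gcd a q = 1),
        lineKernel χ N (Nat.lcm y q) x *
          (Ups y b (a : ℤ) q * e2pi ((x : ℝ) * ((a : ℝ) / (q : ℝ))))) -
      if q = 1 then halfLineKernel χ N y x else 0 := by
    intro q _
    have h2 : ∀ a ∈ (Finset.Icc 1 q).filter (fun a : ℕ => Nat.gcd a q = 1),
        Lker χ y b N a q x = lineKernel χ N (Nat.lcm y q) x *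
          (Ups y b (a : ℤ) q * e2pi ((x : ℝ) * ((a : ℝ) / (q : ℝ)))) -
            if q = 1 then Ups y b 1 1 * halfLineKernel χ N y x else 0 := fun a ha => by
      rw [Finset.mem_filter, Finset.mem_Icc] at ha
      exact Lker_eq hχs hχ0 hy b N ha.1.1 ha.1.2 ha.2 x
    rw [Finset.sum_congr rfl h2, Finset.sum_sub_distrib, Ups_one_one hy, one_mul]
    congr 1
    split_ifs with hq
    · subst hq
      simp
    · simp
  rw [Finset.sum_congr rfl h1, Finset.sum_sub_distrib, Finset.sum_ite_eq']

lemma norm_low_main_le {χ : ℝ → ℝ} {N A : ℝ} {y : ℕ} (hy : 0 < y) (hA : 0 ≤ A) (hN : 0 < N)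
    (hK : ∀ l : ℕ, 0 < l → ∀ x : ℝ, ‖lineKernel χ N l x‖ ≤ A * N⁻¹) (b x : ℤ) {D : Finset ℕ}
    (hD : ∀ h ∈ D, 0 < h) (F : Finset ℤ) :
    ‖∑ z ∈ F, ∑ h ∈ D, lineKernel χ N (y * h) ((x - z : ℤ) : ℝ) * (((Nat.totient h : ℂ))⁻¹ *
        (ArithmeticFunction.moebius h * ramanujanSum h (x - z)) *
        if (y : ℤ) ∣ x - z - b then (y : ℂ) else 0)‖ ≤
      A * ((y : ℝ) / N * ∑ z ∈ F.filter (fun z => (y : ℤ) ∣ x - z - b),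
        ∑ h ∈ D, (Nat.totient h : ℝ)⁻¹ * ‖ramanujanSum h (x - z)‖) := by
  rw [Finset.sum_filter, Finset.mul_sum, Finset.mul_sum]
  refine (norm_sum_le _ _).trans (Finset.sum_le_sum fun z _ => ?_)
  split_ifs with hz
  · rw [Finset.mul_sum, Finset.mul_sum]
    refine (norm_sum_le _ _).trans (Finset.sum_le_sum fun h hh => ?_)
    have hμ : ‖((ArithmeticFunction.moebius h : ℤ) : ℂ)‖ ≤ 1 := by
      rw [Complex.norm_intCast]
      exact_mod_cast ArithmeticFunction.abs_moebius_le_one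
    have hk := hK (y * h) (Nat.mul_pos hy (hD h hh)) ((x - z : ℤ) : ℝ)
    simp only [norm_mul, norm_inv, Complex.norm_natCast]
    calc ‖lineKernel χ N (y * h) ((x - z : ℤ) : ℝ)‖ * ((Nat.totient h : ℝ)⁻¹ *
          (‖((ArithmeticFunction.moebius h : ℤ) : ℂ)‖ * ‖ramanujanSum h (x - z)‖) * (y : ℝ))
        ≤ A * N⁻¹ * ((Nat.totient h : ℝ)⁻¹ *
          (1 * ‖ramanujanSum h (x - z)‖) * (y : ℝ)) := by gcongr
      _ = _ := by ring
  · simp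

lemma eventually_mul_log_rpow_le (y K : ℕ) (s : ℝ) :
    ∀ᶠ N : ℕ in Filter.atTop, (y : ℝ) * (2 * Real.log N ^ s) ^ (K + 1) ≤ N := by
  have h1 := isLittleO_log_rpow_rpow_atTop (s * (K + 1 : ℕ)) one_pos
  have hc : (0 : ℝ) < ((y : ℝ) * 2 ^ (K + 1) + 1)⁻¹ := by positivity
  have h2 := tendsto_natCast_atTop_atTop (R := ℝ) |>.eventually
    ((h1.bound hc).and (Filter.eventually_ge_atTop 1))
  filter_upwards [h2] with N hN
  obtain ⟨h3, h4⟩ := hN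
  have hl : 0 ≤ Real.log N := Real.log_nonneg h4
  rw [Real.rpow_one, Real.norm_eq_abs, Real.norm_eq_abs, abs_of_nonneg (by positivity),
    abs_of_nonneg (by positivity), Real.rpow_mul hl, Real.rpow_natCast,
    inv_mul_eq_div, le_div_iff₀ (by positivity)] at h3
  rw [mul_pow]
  have h5 : 0 ≤ (Real.log N ^ s) ^ (K + 1) := by positivity
  linarith


theorem low_term_fixed_scale (χ : ℝ → ℝ) (hχs : ContDiff ℝ (⊤ : ℕ∞) χ)
    (hχr : ∀ x : ℝ, χ x ∈ Set.Icc (0 : ℝ) 1)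
    (hχ1 : ∀ x ∈ Set.Icc (-(1/16) : ℝ) (1/16), χ x = 1)
    (hχ0 : ∀ x : ℝ, x ∉ Set.Icc (-(1/4) : ℝ) (1/4) → χ x = 0) :
    ∀ ε : ℝ, 0 < ε → ∀ r : ℝ, 1 < r → r < 2 →
      ∃ C C' : ℝ, 0 < C ∧ 0 < C' ∧
        ∀ y : ℕ, 1 ≤ y →
          ∃ N0 : ℕ,
            ∀ N : ℕ, N0 < N → ∀ b : ℤ, Int.gcd b y = 1 →
              ∀ Q : ℝ, 1 ≤ Q → Q < Real.log N ^ (C' * (r / (r - 1))) →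
                ∀ F : Finset ℤ, (∀ x ∈ F, x ∈ Set.Icc (0 : ℤ) (N : ℤ)) →
                  (⨆ x : ℤ, (‖LoConv χ y b N Q F x‖₊ : ℝ≥0∞)) ≤
                    ENNReal.ofReal
                      (C * Q ^ ε * ((y : ℝ) / (N : ℝ)) ^ (1 / r) *
                        (F.card : ℝ) ^ (1 / r)) := by
  intro ε hε r hr hr2
  have hr0 : 0 < r - 1 := by linarith
  obtain ⟨A, hA, hK⟩ := norm_lineKernel_le hχs (HasCompactSupport.intro isCompact_Icc hχ0)
  obtain ⟨K, hKr⟩ := exists_nat_ge (1 / (r - 1))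
  rw [div_le_iff₀ hr0] at hKr
  obtain ⟨c, hc, hmain⟩ := exists_sum_ramanujanSum_le (ρ := 1 / r) (K := K) hε (by positivity) (by
    rw [div_mul_eq_mul_div, div_le_iff₀ (by linarith)]
    linarith)
  set H : ℝ := (3 ^ r / (r - 1)) ^ (1 / r) with hH
  refine ⟨A * (c * 2 ^ ε) + H, 1, by positivity, one_pos, fun y hy => ?_⟩
  obtain ⟨N0, hN0⟩ :=
    Filter.eventually_atTop.1 (eventually_mul_log_rpow_le y K (1 * (r / (r - 1))))
  refine ⟨N0, fun N hN b hb Q hQ1 hQ F hF => ?_⟩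
  set n := ⌈Q⌉₊ with hn
  have hn0 : 0 < n := Nat.ceil_pos.2 (by linarith)
  have hn2 : (n : ℝ) ≤ 2 * Q := by
    have := Nat.ceil_lt_add_one (show 0 ≤ Q by linarith)
    linarith
  have hnN : y * n ^ (K + 1) ≤ N := by
    have h1 : (y : ℝ) * (n : ℝ) ^ (K + 1) ≤ N := by
      refine le_trans ?_ (hN0 N hN.le)
      gcongr
      linarith
    exact_mod_cast h1
  have hyN : y ≤ N := (Nat.le_mul_of_pos_right y (by positivity)).trans hnN
  have hyN' : (y : ℝ) ≤ N := by exact_mod_cast hyN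
  have hy1 : (1 : ℝ) ≤ y := by exact_mod_cast hy
  have hNpos : (0 : ℝ) < N := by linarith
  set R : ℝ := ((y : ℝ) / N) ^ (1 / r) * (F.card : ℝ) ^ (1 / r) with hR
  have hR0 : 0 ≤ R := by positivity
  refine iSup_le fun x => ?_
  rw [← enorm_eq_nnnorm, ← ofReal_norm]
  refine ENNReal.ofReal_le_ofReal ?_
  set D := (Finset.Icc 1 n).filter (fun h : ℕ => (h : ℝ) < Q ∧ y.Coprime h) with hD
  have hDmem : ∀ h, h ∈ D ↔ (1 ≤ h ∧ h ≤ n) ∧ (h : ℝ) < Q ∧ y.Coprime h := fun h => by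
    rw [hD, Finset.mem_filter, Finset.mem_Icc]
  have h1 := norm_low_main_le hy hA.le hNpos (fun l hl x => hK N hNpos l hl x) b x
    (fun h hh => ((hDmem h).1 hh).1.1) F
  have h2 := hmain y n N hy hn0 hnN D (Finset.filter_subset _ _) (fun h hh d hd => by
      rw [hDmem] at hh ⊢
      have hdh : d ≤ h := Nat.le_of_dvd hh.1.1 hd
      refine ⟨⟨Nat.pos_of_dvd_of_pos hd hh.1.1, hdh.trans hh.1.2⟩,
        lt_of_le_of_lt (by exact_mod_cast hdh) hh.2.1, hh.2.2.coprime_dvd_right hd⟩)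
    (fun h hh => ((hDmem h).1 hh).2.2) b x F hF
  rw [Real.mul_rpow (by positivity) (by positivity), ← hR] at h2
  have h3 : (n : ℝ) ^ ε ≤ 2 ^ ε * Q ^ ε := by
    rw [← Real.mul_rpow zero_le_two (by linarith)]
    gcongr
  have h4 := norm_sum_halfLineKernel_le hχs hχr hχ0 hr hr2 hy hyN' F x
  have h5 : ‖∑ z ∈ F, halfLineKernel χ N y ((x - z : ℤ) : ℝ)‖ ≤ H * R := by
    refine h4.trans ?_
    rw [Real.mul_rpow (by positivity) (by positivity), ← hH, hR, mul_assoc]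
    have : (N : ℝ)⁻¹ ≤ y / N := by
      rw [inv_eq_one_div]
      gcongr
    gcongr
  have h6 : ‖∑ z ∈ F, if 1 ∈ (Finset.Icc 1 (y * n)).filter (fun q : ℕ => (hgt y q : ℝ) < Q) then
      halfLineKernel χ N y ((x - z : ℤ) : ℝ) else 0‖ ≤ H * R := by
    split_ifs
    · exact h5
    · rw [Finset.sum_const_zero, norm_zero]
      positivity
  have h7 : 1 ≤ Q ^ ε := Real.one_le_rpow hQ1 hε.le
  simp only [LoConv, LoK_eq hχs hχ0 hy (Int.isCoprime_iff_gcd_eq_one.2 hb), ← hn, ← hD]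
  rw [Finset.sum_sub_distrib]
  refine (norm_sub_le _ _).trans ((add_le_add (h1.trans
    (mul_le_mul_of_nonneg_left h2 hA.le)) h6).trans ?_)
  calc A * (c * (n : ℝ) ^ ε * R) + H * R
      ≤ A * (c * (2 ^ ε * Q ^ ε) * R) + H * R * Q ^ ε := by
        refine add_le_add (by gcongr) (le_mul_of_one_le_right (by positivity) h7)
    _ = _ := by rw [hR]; ring

end
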